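/- Let n ≥ 7 be an integer, let X = gcd(3(n−3)(2n−9), (n−7)(n−3)(2n−9), 12, 2n(n−7), 3(n−7)), and let Y be the natural number determined by X·Y = 3(n−3)(n−7)(2n−9). Then the Smith group of the adjacency matrix of the Johnson graph J(n,3) satisfies S(A_{n,3,3,2}) ≅ (ℤ/3(n−7)ℤ)^{C(n,2)−2n+1} ⊕ (ℤ/3(2n−9)(n−7)ℤ)^{n−2} ⊕ (ℤ/3ℤ)^{C(n,3)−2C(n,2)+n+1} ⊕ ℤ/Xℤ ⊕ ℤ/Yℤ, where ℤ/0ℤ is understood to be ℤ. -/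

import Mathlib

open scoped Classical

/-- The `k`-element subsets of `{1,…,n}`. -/
def ksubsets (n k : ℕ) : Finset (Finset ℕ) :=
  (Finset.Icc 1 n).powerset.filter fun A => A.card = k

/-- The subset intersection matrix `A_{n,kr,kc,ℓ}`; `A_{n,3,3,2}` is the adjacency
matrix of the Johnson graph `J(n,3)`. -/
noncomputable def interMat (n kr kc ℓ : ℕ) :
    Matrix ↥(ksubsets n kr) ↥(ksubsets n kc) ℤ :=
  Matrix.of fun A B => if ((A : Finset ℕ) ∩ (B : Finset ℕ)).card = ℓ then 1 else 0

/-- The Smith group of an integer matrix. -/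
abbrev SmithGroup {ρ γ : Type*} (M : Matrix ρ γ ℤ) : Type _ :=
  (γ → ℤ) ⧸ Submodule.span ℤ (Set.range fun r : ρ => M r)


def dd (d : ℕ) : ℕ := if 3 ∣ d then 3 * d else d

theorem struct3 {N : Type*} [AddCommGroup N] {ι : Type*} [Fintype ι] [Module.Finite ℤ N]
    (d : ι → ℕ) (h : ι → N)
    (hmem : ∀ i, ∃ x : N, (3:ℤ) • x = h i)
    (hgen : ∀ x : N, ∃ c : ι → ℤ, (3:ℤ) • x = ∑ i, c i • h i)
    (hrel : ∀ c : ι → ℤ, ∑ i, c i • h i = 0 ↔ ∀ i, (d i : ℤ) ∣ c i) :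
    ∃ k : ℕ, Nonempty (((∀ i, ZMod (dd (d i))) × (Fin k → ZMod 3)) ≃+ N) := by
  have hd : ∀ i, (d i : ℤ) • h i = 0 := by
    intro i
    have := (hrel (Pi.single i (d i : ℤ))).2 (by
      intro j
      by_cases hj : j = i
      · subst hj; simp
      · simp [Pi.single_eq_of_ne hj])
    rw [Finset.sum_eq_single i] at this
    · simpa using this
    · intro j _ hj; simp [Pi.single_eq_of_ne hj]
    · simp
  have hm : ∀ i, ∃ m : N, (3:ℤ) • m = h i ∧ (¬ 3 ∣ d i → (d i : ℤ) • m = 0) := by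
    intro i
    by_cases h3 : 3 ∣ d i
    · obtain ⟨x, hx⟩ := hmem i
      exact ⟨x, hx, fun h => absurd h3 h⟩
    · have hc : IsCoprime (3:ℤ) (d i : ℤ) := by
        have : Nat.Coprime 3 (d i) := (Nat.Prime.coprime_iff_not_dvd Nat.prime_three).2 h3
        exact_mod_cast Nat.isCoprime_iff_coprime.2 this
      obtain ⟨a, b, hab⟩ := hc
      refine ⟨a • h i, ?_, fun _ => ?_⟩
      · have : (3:ℤ) • a • h i = (a * 3 + b * d i) • h i - b • ((d i : ℤ) • h i) := by module
        rw [this, hab, hd]; simp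
      · rw [smul_comm, hd, smul_zero]
  choose m hm3 hm0 using hm
  have hdm : ∀ i, (dd (d i) : ℤ) • m i = 0 := by
    intro i
    unfold dd
    split_ifs with h3
    · push_cast
      rw [mul_comm, mul_smul, hm3, hd]
    · exact hm0 i h3
  have key : ∀ c : ι → ℤ, ∑ i, c i • m i = 0 → ∀ i, (dd (d i) : ℤ) ∣ c i := by
    intro c hc
    have h1 : ∑ i, c i • h i = 0 := by
      have : ∑ i, c i • h i = (3:ℤ) • ∑ i, c i • m i := by
        rw [Finset.smul_sum]
        refine Finset.sum_congr rfl fun i _ => ?_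
        rw [smul_comm, hm3]
      rw [this, hc, smul_zero]
    have h2 := (hrel c).1 h1
    have h4 : ∑ i, (if 3 ∣ d i then c i / 3 else 0) • h i = 0 := by
      rw [← hc]
      refine Finset.sum_congr rfl fun i _ => ?_
      split_ifs with h3
      · have : (3:ℤ) ∣ c i := (Int.natCast_dvd_natCast.2 h3).trans (h2 i)
        obtain ⟨e, he⟩ := this
        rw [he, ← hm3]
        simp [mul_comm 3 e, mul_smul]
      · obtain ⟨e, he⟩ := h2 i
        rw [he, mul_comm, mul_smul, hm0 i h3]; simp
    have h5 := (hrel _).1 h4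
    intro i
    have h5i := h5 i
    unfold dd
    split_ifs with h3
    · simp only [h3, if_true] at h5i
      have : (3:ℤ) ∣ c i := (Int.natCast_dvd_natCast.2 h3).trans (h2 i)
      obtain ⟨e, he⟩ := this
      rw [he] at h5i ⊢
      push_cast
      simp at h5i
      exact mul_dvd_mul_left _ h5i
    · exact h2 i
  let L : ∀ i, ZMod (dd (d i)) →+ N := fun i =>
    ZMod.lift (dd (d i)) ⟨zmultiplesHom N (m i), by simpa using hdm i⟩
  have hL : ∀ i (z : ℤ), L i (z : ZMod (dd (d i))) = z • m i := by
    intro i z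
    simp [L]
  let T : AddSubgroup N := (zsmulAddGroupHom (3:ℤ) : N →+ N).ker
  have hT : ∀ x : N, x ∈ T ↔ (3:ℤ) • x = 0 := by
    intro x; simp [T, AddMonoidHom.mem_ker]
  let _ : Module (ZMod 3) T := AddCommGroup.zmodModule (n := 3) (by
    rintro ⟨x, hx⟩
    ext
    have := (hT x).1 hx
    simpa using by exact_mod_cast this)
  let φ : (∀ i, ZMod (dd (d i))) →+ N := ∑ i, (L i).comp (Pi.evalAddMonoidHom _ i)
  have hφ : ∀ c : ι → ℤ, φ (fun i => (c i : ZMod (dd (d i)))) = ∑ i, c i • m i := by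
    intro c
    simp [φ, hL]
  let P : Submodule (ZMod 3) T := AddSubgroup.toZModSubmodule 3 (φ.range.comap T.subtype)
  have hP : ∀ x : T, x ∈ P ↔ (x : N) ∈ φ.range := by
    intro x; rfl
  obtain ⟨C, hC⟩ := Submodule.exists_isCompl P
  have : Module.Finite ℤ T := by
    have : Module.Finite ℤ (AddSubgroup.toIntSubmodule T) := inferInstance
    exact this
  have : Module.Finite (ZMod 3) T := Module.Finite.of_restrictScalars_finite ℤ (ZMod 3) T
  let eC := (Module.finBasis (ZMod 3) C).equivFun
  refine ⟨Module.finrank (ZMod 3) C, ⟨AddEquiv.ofBijective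
    (φ.coprod (T.subtype.comp (C.subtype.toAddMonoidHom.comp eC.symm.toLinearMap.toAddMonoidHom))) ⟨?_, ?_⟩⟩⟩
  · rw [injective_iff_map_eq_zero]
    rintro ⟨a, v⟩ hav
    simp only [AddMonoidHom.coprod_apply] at hav
    set t : C := eC.symm v with ht
    change φ a + ((t : T) : N) = 0 at hav
    have ht1 : (t : T) ∈ P := by
      rw [hP]
      refine ⟨-a, ?_⟩
      rw [map_neg]; exact (eq_neg_of_add_eq_zero_right hav).symm
    have ht2 : (t : T) = 0 := by
      have := hC.disjoint.le_bot ⟨ht1, t.2⟩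
      simpa using this
    have ht3 : t = 0 := by ext1; exact ht2
    have hv : v = 0 := by
      have := congrArg eC ht3
      simpa [ht] using this
    rw [ht2] at hav
    simp at hav
    choose c hc using fun i => ZMod.intCast_surjective (a i)
    have ha : a = fun i => (c i : ZMod (dd (d i))) := by funext i; exact (hc i).symm
    rw [ha, hφ] at hav
    have := key c hav
    rw [Prod.mk_eq_zero]
    refine ⟨?_, hv⟩
    rw [ha]; funext i
    exact (ZMod.intCast_zmod_eq_zero_iff_dvd _ _).2 (this i)
  · intro x
    obtain ⟨c, hc⟩ := hgen x
    have h3 : (3:ℤ) • (x - ∑ i, c i • m i) = 0 := by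
      rw [smul_sub, hc, sub_eq_zero, Finset.smul_sum]
      refine Finset.sum_congr rfl fun i _ => ?_
      rw [smul_comm, hm3]
    let t : T := ⟨x - ∑ i, c i • m i, (hT _).2 h3⟩
    have : t ∈ P ⊔ C := by rw [hC.sup_eq_top]; trivial
    obtain ⟨p, hp, q, hq, hpq⟩ := Submodule.mem_sup.1 this
    obtain ⟨a, ha⟩ := (hP p).1 hp
    refine ⟨(a + (fun i => (c i : ZMod (dd (d i)))), eC ⟨q, hq⟩), ?_⟩
    simp only [AddMonoidHom.coprod_apply, map_add, hφ, ha]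
    change (p : N) + _ + (((eC.symm (eC ⟨q, hq⟩) : C) : T) : N) = x
    rw [eC.symm_apply_apply]
    have h6 : (p : N) + (q : N) = x - ∑ i, c i • m i := by
      have := congrArg (fun z : T => (z : N)) hpq
      simpa [t] using this
    have : x = (p : N) + (q : N) + ∑ i, c i • m i := by rw [h6]; abel
    rw [this]; simp; abel



noncomputable def hc (N : Type*) [AddCommGroup N] : ℕ := Nat.card (N →ₗ[ℤ] ZMod 3)

theorem hc_congr {N N' : Type*} [AddCommGroup N] [AddCommGroup N'] (e : N ≃+ N') : hc N = hc N' :=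
  Nat.card_congr
    { toFun := fun f => f.comp e.symm.toIntLinearEquiv.toLinearMap
      invFun := fun f => f.comp e.toIntLinearEquiv.toLinearMap
      left_inv := fun f => by ext x; simp
      right_inv := fun f => by ext x; simp }

theorem hc_prod (A B : Type*) [AddCommGroup A] [AddCommGroup B] : hc (A × B) = hc A * hc B := by
  unfold hc
  rw [← Nat.card_prod]
  exact Nat.card_congr (LinearMap.coprodEquiv (R := ℤ) (M := A) (M₂ := B) (M₃ := ZMod 3) ℕ).toEquiv.symm

theorem hc_pi {ι : Type*} [Fintype ι] (A : ι → Type*) [∀ i, AddCommGroup (A i)] :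
    hc (∀ i, A i) = ∏ i, hc (A i) := by
  unfold hc
  rw [← Nat.card_pi]
  exact Nat.card_congr (LinearMap.lsum (R := ℤ) (M := ZMod 3) A ℕ).toEquiv.symm

theorem hc_zmod (d : ℕ) : hc (ZMod d) = if 3 ∣ d then 3 else 1 := by
  unfold hc
  have e1 : (ZMod d →ₗ[ℤ] ZMod 3) ≃ {x : ZMod 3 // (d : ZMod 3) * x = 0} :=
    { toFun := fun f => ⟨f 1, by
        have : f ((d : ℤ) • (1 : ZMod d)) = (d : ℤ) • f 1 := map_smul _ _ _
        simp at this
        exact mul_eq_zero.2 this⟩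
      invFun := fun x => (ZMod.lift d ⟨zmultiplesHom (ZMod 3) x.1, by simpa using x.2⟩).toIntLinearMap
      left_inv := fun f => by
        ext y
        obtain ⟨z, rfl⟩ := ZMod.intCast_surjective y
        have : f (z • (1 : ZMod d)) = z • f 1 := map_smul _ _ _
        simp only [AddMonoidHom.coe_toIntLinearMap, ZMod.lift_coe, zmultiplesHom_apply, ← this]
        simp
      right_inv := fun x => by
        ext
        have := ZMod.lift_coe d ⟨zmultiplesHom (ZMod 3) x.1, by simpa using x.2⟩ 1
        simp only [AddMonoidHom.coe_toIntLinearMap]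
        simpa using this }
  rw [Nat.card_congr e1]
  split_ifs with h
  · have : (d : ZMod 3) = 0 := (ZMod.natCast_eq_zero_iff d 3).2 h
    simp [this]
  · have hh : (d : ZMod 3) ≠ 0 := fun h' => h ((ZMod.natCast_eq_zero_iff d 3).1 h')
    have : Fact (Nat.Prime 3) := ⟨Nat.prime_three⟩
    simp [hh]

theorem struct3_unique {N N' : Type*} [AddCommGroup N] [AddCommGroup N'] {ι : Type*} [Fintype ι]
    [Module.Finite ℤ N] [Module.Finite ℤ N']
    (d : ι → ℕ) (h : ι → N)
    (hmem : ∀ i, ∃ x : N, (3:ℤ) • x = h i)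
    (hgen : ∀ x : N, ∃ c : ι → ℤ, (3:ℤ) • x = ∑ i, c i • h i)
    (hrel : ∀ c : ι → ℤ, ∑ i, c i • h i = 0 ↔ ∀ i, (d i : ℤ) ∣ c i)
    (h' : ι → N')
    (hmem' : ∀ i, ∃ x : N', (3:ℤ) • x = h' i)
    (hgen' : ∀ x : N', ∃ c : ι → ℤ, (3:ℤ) • x = ∑ i, c i • h' i)
    (hrel' : ∀ c : ι → ℤ, ∑ i, c i • h' i = 0 ↔ ∀ i, (d i : ℤ) ∣ c i)
    (hcard : hc N = hc N') : Nonempty (N ≃+ N') := by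
  obtain ⟨k, ⟨e⟩⟩ := struct3 d h hmem hgen hrel
  obtain ⟨k', ⟨e'⟩⟩ := struct3 d h' hmem' hgen' hrel'
  have aux : ∀ k, hc ((∀ i, ZMod (dd (d i))) × (Fin k → ZMod 3)) =
      hc (∀ i, ZMod (dd (d i))) * 3 ^ k := by
    intro k
    rw [hc_prod, hc_pi (fun _ : Fin k => ZMod 3)]
    simp [hc_zmod]
  have hpos : 0 < hc (∀ i, ZMod (dd (d i))) := by
    rw [hc_pi]
    refine Finset.prod_pos fun i _ => ?_
    rw [hc_zmod]; split_ifs <;> norm_num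
  have hk : k = k' := by
    rw [← hc_congr e, ← hc_congr e', aux, aux] at hcard
    exact Nat.pow_right_injective (le_refl 2 |>.trans (by norm_num)) (Nat.eq_of_mul_eq_mul_left hpos hcard)
  subst hk
  exact ⟨e.symm.trans e'⟩


def dfam (a b p q g y : ℕ) : (Fin a ⊕ (Fin b ⊕ Fin 2)) → ℕ :=
  Sum.elim (fun _ => p) (Sum.elim (fun _ => q * p) ![g, y])

theorem target_ok (a b k p q g y X : ℕ) (hX : X = 3 * g ∨ (X = g ∧ ¬ 3 ∣ g)) :
    ∃ h : (Fin a ⊕ (Fin b ⊕ Fin 2)) → ((Fin a → ZMod (3 * p)) × (Fin b → ZMod (3 * q * p)) ×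
        (Fin k → ZMod 3) × ZMod X × ZMod (3 * y)),
      (∀ i, ∃ x, (3:ℤ) • x = h i) ∧
      (∀ x, ∃ c : (Fin a ⊕ (Fin b ⊕ Fin 2)) → ℤ, (3:ℤ) • x = ∑ i, c i • h i) ∧
      (∀ c : (Fin a ⊕ (Fin b ⊕ Fin 2)) → ℤ, ∑ i, c i • h i = 0 ↔
        ∀ i, (dfam a b p q g y i : ℤ) ∣ c i) := by
  let u : (Fin a ⊕ (Fin b ⊕ Fin 2)) → ((Fin a → ZMod (3 * p)) × (Fin b → ZMod (3 * q * p)) ×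
        (Fin k → ZMod 3) × ZMod X × ZMod (3 * y)) :=
    Sum.elim (fun j => (Pi.single j 1, 0, 0, 0, 0)) (Sum.elim (fun j => (0, Pi.single j 1, 0, 0, 0))
      ![(0, 0, 0, 1, 0), (0, 0, 0, 0, 1)])
  have hu : ∀ c : (Fin a ⊕ (Fin b ⊕ Fin 2)) → ℤ, ∑ i, c i • u i =
      (fun j => ((c (Sum.inl j) : ℤ) : ZMod (3 * p)),
       fun j => ((c (Sum.inr (Sum.inl j)) : ℤ) : ZMod (3 * q * p)), 0,
       ((c (Sum.inr (Sum.inr 0)) : ℤ) : ZMod X), ((c (Sum.inr (Sum.inr 1)) : ℤ) : ZMod (3 * y))) := by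
    intro c
    rw [Fintype.sum_sum_type, Fintype.sum_sum_type, Fin.sum_univ_two]
    refine Prod.ext ?_ (Prod.ext ?_ (Prod.ext ?_ (Prod.ext ?_ ?_)))
    · funext j
      simp [u, Prod.fst_sum, Finset.sum_apply, Pi.single_apply]
    · funext j
      simp [u, Prod.fst_sum, Prod.snd_sum, Finset.sum_apply, Pi.single_apply]
    · funext j
      simp [u, Prod.fst_sum, Prod.snd_sum]
    · simp [u, Prod.fst_sum, Prod.snd_sum]
    · simp [u, Prod.fst_sum, Prod.snd_sum]
  have hs : ∀ c : (Fin a ⊕ (Fin b ⊕ Fin 2)) → ℤ, ∑ i, c i • ((3:ℤ) • u i) =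
      (3:ℤ) • ∑ i, c i • u i := by
    intro c
    rw [Finset.smul_sum]
    exact Finset.sum_congr rfl fun i _ => smul_comm _ _ _
  refine ⟨fun i => (3:ℤ) • u i, fun i => ⟨u i, rfl⟩, ?_, ?_⟩
  · rintro ⟨x1, x2, x3, x4, x5⟩
    choose c1 hc1 using fun j => ZMod.intCast_surjective (x1 j)
    choose c2 hc2 using fun j => ZMod.intCast_surjective (x2 j)
    obtain ⟨c4, hc4⟩ := ZMod.intCast_surjective x4
    obtain ⟨c5, hc5⟩ := ZMod.intCast_surjective x5
    refine ⟨Sum.elim c1 (Sum.elim c2 ![c4, c5]), ?_⟩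
    rw [hs, hu]
    refine Prod.ext ?_ (Prod.ext ?_ (Prod.ext ?_ (Prod.ext ?_ ?_)))
    · funext j; simp [hc1]
    · funext j; simp [hc2]
    · funext j
      have : (3 : ZMod 3) = 0 := by decide
      simp [this]
    · simp [hc4]
    · simp [hc5]
  · intro c
    rw [hs, hu]
    have e0 : ∀ (m : ℕ) (z : ℤ), (3:ℤ) • ((z : ℤ) : ZMod m) = 0 ↔ (m : ℤ) ∣ 3 * z := by
      intro m z
      rw [← ZMod.intCast_zmod_eq_zero_iff_dvd]
      simp
    have e1 : ∀ (m : ℕ) (z : ℤ), ((3 * m : ℕ) : ℤ) ∣ 3 * z ↔ (m : ℤ) ∣ z := by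
      intro m z
      push_cast
      exact mul_dvd_mul_iff_left (by norm_num)
    have e2 : ∀ z : ℤ, (X : ℤ) ∣ 3 * z ↔ (g : ℤ) ∣ z := by
      intro z
      rcases hX with h | ⟨h, h3⟩
      · rw [h, e1]
      · rw [h]
        refine ⟨fun hz => ?_, fun hz => hz.mul_left _⟩
        have : IsCoprime (g : ℤ) 3 := by
          have : Nat.Coprime g 3 := ((Nat.Prime.coprime_iff_not_dvd Nat.prime_three).2 h3).symm
          exact_mod_cast Nat.isCoprime_iff_coprime.2 this
        exact this.dvd_of_dvd_mul_left hz
    simp only [Prod.smul_mk, Prod.mk_eq_zero, Sum.forall, Fin.forall_fin_two, funext_iff,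
      Pi.smul_apply, Pi.zero_apply, e0, e1, e2, dfam, Sum.elim_inl, Sum.elim_inr, mul_assoc]
    simp [e1]

theorem target_hc (a b k p q y X : ℕ) :
    hc ((Fin a → ZMod (3 * p)) × (Fin b → ZMod (3 * q * p)) ×
        (Fin k → ZMod 3) × ZMod X × ZMod (3 * y)) = 3 ^ (a + b + k + 1) * (if 3 ∣ X then 3 else 1) := by
  rw [hc_prod, hc_prod, hc_prod, hc_prod, hc_pi, hc_pi, hc_pi]
  simp only [hc_zmod, mul_assoc, Nat.dvd_mul_right, if_true]
  simp only [Finset.prod_const, Finset.card_univ, Fintype.card_fin, dvd_refl, if_true]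
  split_ifs <;> ring


/-- `k`-subsets of `V`. -/
abbrev KS (V : Type*) (k : ℕ) := {s : Finset V // s.card = k}

def U1 {W : Type*} : (W → ℤ) →ₗ[ℤ] (KS W 2 → ℤ) where
  toFun x e := ∑ a ∈ e.1, x a
  map_add' x y := by funext e; simp [Finset.sum_add_distrib]
  map_smul' c x := by funext e; simp [Finset.mul_sum]

def hat {k : ℕ} : (Fin k → ℤ) →ₗ[ℤ] (Fin (k+1) → ℤ) where
  toFun x := Fin.cons 0 x
  map_add' x y := by
    funext i; refine Fin.cases ?_ (fun j => ?_) i <;> simp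
  map_smul' c x := by
    funext i; refine Fin.cases ?_ (fun j => ?_) i <;> simp

theorem hat_zero {k : ℕ} (x : Fin k → ℤ) : hat x 0 = 0 := rfl
theorem hat_succ {k : ℕ} (x : Fin k → ℤ) (i : Fin k) : hat x i.succ = x i := rfl
theorem hat_sum {k : ℕ} (x : Fin k → ℤ) : ∑ i, hat x i = ∑ i, x i := by
  rw [Fin.sum_univ_succ]; simp [hat_zero, hat_succ]

def del0 (k : ℕ) : KS (Fin (k+1)) 2 → ℤ := fun e => if e.1 = {0, 1} then 1 else 0

def Psi (k : ℕ) : ((Fin k → ℤ) × ℤ × ℤ) →ₗ[ℤ] (KS (Fin (k+1)) 2 → ℤ) where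
  toFun t := U1 (hat t.1) + t.2.1 • (1 : KS (Fin (k+1)) 2 → ℤ) + t.2.2 • del0 k
  map_add' x y := by simp only [Prod.fst_add, Prod.snd_add, map_add]; module
  map_smul' c x := by
    simp only [Prod.smul_fst, Prod.smul_snd, map_smul, RingHom.id_apply, smul_add, smul_assoc]

theorem Psi_sat (k : ℕ) (hk : 5 ≤ k) (d : ℤ) (w : Fin k → ℤ) (A B : ℤ)
    (h : ∀ e, d ∣ Psi k (w, A, B) e) : (∀ i, d ∣ w i) ∧ d ∣ A ∧ d ∣ B := by
  have hp : ∀ a b : Fin (k+1), a ≠ b → d ∣ hat w a + hat w b + A +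
      B * (if ({a, b} : Finset (Fin (k+1))) = {0, 1} then 1 else 0) := by
    intro a b hab
    have := h ⟨{a, b}, Finset.card_pair hab⟩
    simpa [Psi, U1, del0, Finset.sum_pair hab] using this
  have hne : ∀ a b : Fin (k+1), 2 ≤ b.val → ({a, b} : Finset (Fin (k+1))) ≠ {0, 1} := by
    intro a b hb heq
    have : b ∈ ({0, 1} : Finset (Fin (k+1))) := by rw [← heq]; simp
    simp only [Finset.mem_insert, Finset.mem_singleton] at this
    have h1 : (1 : Fin (k+1)).val = 1 := by
      rw [Fin.val_one']; exact Nat.mod_eq_of_lt (by omega)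
    rcases this with h | h <;> rw [h] at hb
    · simp at hb
    · omega
  have hp2 : ∀ a b : Fin (k+1), a ≠ b → 2 ≤ b.val → d ∣ hat w a + hat w b + A := by
    intro a b hab hb
    have := hp a b hab
    rwa [if_neg (hne a b hb), mul_zero, add_zero] at this
  have e1 : ∀ b : Fin (k+1), 2 ≤ b.val → d ∣ hat w b + A := by
    intro b hb
    have := hp2 0 b (by intro h; rw [← h] at hb; simp at hb) hb
    simpa [hat_zero] using this
  let b2 : Fin (k+1) := ⟨2, by omega⟩
  let b3 : Fin (k+1) := ⟨3, by omega⟩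
  have hA : d ∣ A := by
    have h1 := hp2 b2 b3 (by simp [b2, b3]) (by simp [b3])
    have h2 := e1 b2 (by simp [b2])
    have h3 := e1 b3 (by simp [b3])
    have : A = (hat w b2 + A) + (hat w b3 + A) - (hat w b2 + hat w b3 + A) := by ring
    rw [this]; exact dvd_sub (dvd_add h2 h3) h1
  have e2 : ∀ b : Fin (k+1), 2 ≤ b.val → d ∣ hat w b := by
    intro b hb
    have := dvd_sub (e1 b hb) hA
    simpa using this
  have e3 : ∀ b : Fin (k+1), d ∣ hat w b := by
    intro b
    by_cases hb : 2 ≤ b.val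
    · exact e2 b hb
    · have h1 := hp2 b b2 (by intro h; rw [h] at hb; simp [b2] at hb) (by simp [b2])
      have := dvd_sub (dvd_sub h1 hA) (e2 b2 (by simp [b2]))
      have e : hat w b + hat w b2 + A - A - hat w b2 = hat w b := by ring
      rwa [e] at this
  refine ⟨fun i => ?_, hA, ?_⟩
  · have := e3 i.succ
    rwa [hat_succ] at this
  · have h01 : (0 : Fin (k+1)) ≠ 1 := by
      intro h
      have := congrArg Fin.val h
      rw [Fin.val_one', Nat.mod_eq_of_lt (by omega)] at this
      simp at this
    have := hp 0 1 h01
    rw [if_pos rfl, mul_one] at this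
    have h2 := dvd_sub this (dvd_add (dvd_add (e3 0) (e3 1)) hA)
    have e : hat w 0 + hat w 1 + A + B - (hat w 0 + hat w 1 + A) = B := by ring
    rwa [e] at h2

theorem exists_compl {L F : Type*} [AddCommGroup L] [AddCommGroup F]
    [Module.Free ℤ L] [Module.Finite ℤ L] [Module.Free ℤ F] [Module.Finite ℤ F]
    (ψ : L →ₗ[ℤ] F) (hinj : Function.Injective ψ)
    (hsat : ∀ (d : ℤ) (x : F), d ≠ 0 → d • x ∈ LinearMap.range ψ → x ∈ LinearMap.range ψ)
    (a : ℕ) (ha : a + Module.finrank ℤ L = Module.finrank ℤ F) :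
    ∃ Z : (Fin a → ℤ) →ₗ[ℤ] F, Function.Bijective (Z.coprod ψ) := by
  let Q := F ⧸ LinearMap.range ψ
  have htf : Module.IsTorsionFree ℤ Q := by
    rw [Module.isTorsionFree_iff_smul_eq_zero]
    intro r m hm
    by_cases hr : r = 0
    · exact Or.inl hr
    · right
      obtain ⟨x, rfl⟩ := Submodule.mkQ_surjective _ m
      rw [← map_smul, Submodule.mkQ_apply, Submodule.Quotient.mk_eq_zero] at hm
      rw [Submodule.mkQ_apply, Submodule.Quotient.mk_eq_zero]
      exact hsat r x hr hm
  have hfree : Module.Free ℤ Q := inferInstance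
  have hr : Module.finrank ℤ Q = a := by
    have h1 := Submodule.finrank_quotient_add_finrank (LinearMap.range ψ)
    have h2 := LinearMap.finrank_range_of_inj hinj
    change Module.finrank ℤ Q + _ = _ at h1
    omega
  let eQ : (Fin a → ℤ) ≃ₗ[ℤ] Q := LinearEquiv.ofFinrankEq _ _ (by simp [hr])
  obtain ⟨Z, hZ⟩ := Module.projective_lifting_property (LinearMap.range ψ).mkQ eQ.toLinearMap
    (Submodule.mkQ_surjective _)
  have hZ' : ∀ c, (LinearMap.range ψ).mkQ (Z c) = eQ c := fun c => by
    rw [← LinearMap.comp_apply, hZ]; rfl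
  refine ⟨Z, ?_, ?_⟩
  · rw [← LinearMap.ker_eq_bot, LinearMap.ker_eq_bot']
    rintro ⟨c, x⟩ h
    simp only [LinearMap.coprod_apply] at h
    have hc : eQ c = 0 := by
      rw [← hZ', Submodule.mkQ_apply, Submodule.Quotient.mk_eq_zero]
      exact ⟨-x, by rw [map_neg]; exact (eq_neg_of_add_eq_zero_left h).symm⟩
    have hc0 : c = 0 := by simpa using hc
    subst hc0
    simp at h
    have : x = 0 := hinj (by simpa using h)
    simp [this]
  · intro f
    obtain ⟨c, hc⟩ := eQ.surjective ((LinearMap.range ψ).mkQ f)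
    rw [← hZ', eq_comm, ← sub_eq_zero, ← map_sub, Submodule.mkQ_apply,
      Submodule.Quotient.mk_eq_zero] at hc
    obtain ⟨x, hx⟩ := hc
    exact ⟨(c, x), by simp [hx]⟩


theorem sum_ks2 {V R : Type*} [Fintype V] [DecidableEq V] [AddCommMonoid R]
    (G : V → Finset V → R) :
    ∑ e : KS V 2, ∑ a ∈ e.1, G a e.1 = ∑ a, ∑ b ∈ Finset.univ.erase a, G a {a, b} := by
  rw [Finset.sum_sigma', Finset.sum_sigma']
  symm
  refine Finset.sum_bij (fun p hp => ⟨⟨{p.1, p.2}, Finset.card_pair (by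
    simp only [Finset.mem_sigma, Finset.mem_univ, Finset.mem_erase, and_true, true_and] at hp
    exact hp.symm)⟩, p.1⟩) ?_ ?_ ?_ ?_
  · intro p hp; simp
  · rintro ⟨a, b⟩ h1 ⟨a', b'⟩ h2 h
    simp only [Sigma.mk.injEq, Subtype.mk.injEq, heq_eq_eq] at h
    obtain ⟨h, rfl⟩ := h
    simp only [Finset.mem_sigma, Finset.mem_univ, Finset.mem_erase, and_true, true_and] at h1 h2
    have : b ∈ ({a, b'} : Finset V) := by rw [← h]; simp
    simp only [Finset.mem_insert, Finset.mem_singleton] at this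
    rcases this with h | h
    · exact absurd h h1
    · rw [h]
  · rintro ⟨⟨e, he⟩, a⟩ h
    simp only [Finset.mem_sigma, Finset.mem_univ, true_and] at h
    obtain ⟨x, y, hxy, rfl⟩ := Finset.card_eq_two.1 he
    simp only [Finset.mem_insert, Finset.mem_singleton] at h
    rcases h with rfl | rfl
    · exact ⟨⟨a, y⟩, by simp [hxy.symm], rfl⟩
    · refine ⟨⟨a, x⟩, by simp [hxy], ?_⟩
      simp only [Finset.pair_comm]
  · intro p hp; rfl

theorem U1_sum (k : ℕ) (x : Fin (k+1) → ℤ) : ∑ e, U1 x e = k * ∑ i, x i := by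
  have := sum_ks2 (V := Fin (k+1)) (fun a _ => x a)
  simp only [U1, LinearMap.coe_mk, AddHom.coe_mk]
  rw [this]
  simp [Finset.mul_sum]

theorem U1_one {W : Type*} : (U1 (1 : W → ℤ)) = (2:ℤ) • (1 : KS W 2 → ℤ) := by
  funext e
  simp [U1, e.2]

theorem card_KS {V : Type*} [Fintype V] (k : ℕ) : Fintype.card (KS V k) = (Fintype.card V).choose k := by
  exact Fintype.card_finset_len k

theorem del0_sum (k : ℕ) (hk : 5 ≤ k) : ∑ e, del0 k e = 1 := by
  have h01 : (0 : Fin (k+1)) ≠ 1 := by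
    intro h
    have := congrArg Fin.val h
    rw [Fin.val_one', Nat.mod_eq_of_lt (by omega)] at this
    simp at this
  rw [Finset.sum_eq_single (⟨{0,1}, Finset.card_pair h01⟩ : KS (Fin (k+1)) 2)]
  · simp [del0]
  · intro e _ he
    simp only [del0]
    rw [if_neg]
    intro h; exact he (Subtype.ext h)
  · simp

theorem Psi_sum (k : ℕ) (hk : 5 ≤ k) (w : Fin k → ℤ) (A B : ℤ) :
    ∑ e, Psi k (w, A, B) e = k * ∑ i, w i + A * ((k+1).choose 2 : ℕ) + B := by
  simp only [Psi, LinearMap.coe_mk, AddHom.coe_mk, Pi.add_apply, Finset.sum_add_distrib, U1_sum,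
    hat_sum, Pi.smul_apply, smul_eq_mul, Pi.one_apply, mul_one, Finset.sum_const, ← Finset.mul_sum,
    del0_sum k hk]
  have : Fintype.card (KS (Fin (k+1)) 2) = (k+1).choose 2 := by rw [card_KS]; simp
  rw [Finset.card_univ, this]
  simp [mul_comm]

theorem exists_Z (k : ℕ) (hk : 5 ≤ k) (a : ℕ) (ha : a + (k + 2) = (k+1).choose 2) :
    ∃ Z : (Fin a → ℤ) →ₗ[ℤ] (KS (Fin (k+1)) 2 → ℤ), (∀ c, ∑ e, Z c e = 0) ∧
      Function.Bijective (Z.coprod (Psi k)) := by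
  have hinj : Function.Injective (Psi k) := by
    rw [← LinearMap.ker_eq_bot, LinearMap.ker_eq_bot']
    rintro ⟨w, A, B⟩ h
    obtain ⟨h1, h2, h3⟩ := Psi_sat k hk 0 w A B (by intro e; rw [h]; simp)
    simp only [zero_dvd_iff] at h1 h2 h3
    have : w = 0 := funext h1
    simp [this, h2, h3]
  obtain ⟨Z0, hZ⟩ := exists_compl (Psi k) hinj (by
    rintro d x hd ⟨⟨w, A, B⟩, h⟩
    obtain ⟨h1, ⟨A', h2⟩, ⟨B', h3⟩⟩ := Psi_sat k hk d w A B (by intro e; rw [h]; simp)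
    choose w' hw using h1
    refine ⟨(w', A', B'), ?_⟩
    have e : ((w, A, B) : (Fin k → ℤ) × ℤ × ℤ) = d • (w', A', B') := by
      simp only [Prod.smul_mk, Prod.mk.injEq, smul_eq_mul, h2, h3, and_true]
      funext i; simp [hw]
    rw [e, map_smul] at h
    exact smul_right_injective _ hd h) a (by
    have h1 : Module.finrank ℤ ((Fin k → ℤ) × ℤ × ℤ) = k + 2 := by simp
    have h2 : Module.finrank ℤ (KS (Fin (k+1)) 2 → ℤ) = (k+1).choose 2 := by
      rw [Module.finrank_pi, card_KS]; simp
    rw [h1, h2, ha])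
  let σ : (Fin a → ℤ) →ₗ[ℤ] ℤ :=
    { toFun := fun c => ∑ e, Z0 c e
      map_add' := by intro x y; simp [Finset.sum_add_distrib]
      map_smul' := by
        intro x y
        simp only [map_smul, Pi.smul_apply, smul_eq_mul, Finset.mul_sum, RingHom.id_apply] }
  let Z : (Fin a → ℤ) →ₗ[ℤ] (KS (Fin (k+1)) 2 → ℤ) :=
    Z0 - σ.smulRight (del0 k)
  have hZd : ∀ c w A B, Z.coprod (Psi k) (c, w, A, B) = Z0.coprod (Psi k) (c, w, A, B - σ c) := by
    intro c w A B
    simp only [Z, LinearMap.coprod_apply, LinearMap.sub_apply, LinearMap.smulRight_apply, Psi,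
      LinearMap.coe_mk, AddHom.coe_mk]
    module
  refine ⟨Z, ?_, ?_, ?_⟩
  · intro c
    simp [Z, Finset.sum_sub_distrib, ← Finset.mul_sum, del0_sum k hk, σ]
  · rintro ⟨c, w, A, B⟩ ⟨c', w', A', B'⟩ h
    rw [hZd, hZd] at h
    have := hZ.1 h
    simp only [Prod.mk.injEq] at this ⊢
    obtain ⟨h1, h2, h3, h⟩ := this
    subst h1
    refine ⟨rfl, h2, h3, ?_⟩
    linarith
  · intro f
    obtain ⟨⟨c, w, A, B⟩, h⟩ := hZ.2 f
    refine ⟨(c, w, A, B + σ c), ?_⟩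
    rw [hZd, add_sub_cancel_right, h]

abbrev MM (k : ℕ) := (KS (Fin (k+1)) 2 → ℤ) × (Fin (k+1) → ℤ)

def Bp (k : ℕ) (m : MM k) : MM k :=
  (((k:ℤ) - 5) • m.1 + U1 m.2,
    (2 * (k:ℤ) - 5) • m.2 + (2 * ∑ i, m.2 i - 2 * ∑ e, m.1 e) • (1 : Fin (k+1) → ℤ))

def InRel (k : ℕ) (m : MM k) : Prop :=
  ∃ (m' : MM k) (γ : ℤ), m = Bp k m' + (γ * ((k:ℤ) - 1)) • ((1, ((k:ℤ) + 1) • 1) : MM k)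

abbrev LL (a k : ℕ) := (Fin a → ℤ) × (Fin k → ℤ) × (Fin k → ℤ) × ℤ × ℤ × ℤ

def Lam {a k : ℕ} (Z : (Fin a → ℤ) →ₗ[ℤ] (KS (Fin (k+1)) 2 → ℤ)) : LL a k →ₗ[ℤ] MM k where
  toFun t := (Z t.1 + Psi k (t.2.2.1, 2 * t.2.2.2.1 + t.2.2.2.2.1, ∑ i, t.2.1 i + t.2.2.2.2.2),
    hat t.2.1 + (2 * (k:ℤ) - 5) • hat t.2.2.1 +
      (2 * ∑ i, t.2.2.1 i + (4 * (k:ℤ) - 3) * t.2.2.2.1 + (2 * (k:ℤ) - 2) * t.2.2.2.2.1) •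
        (1 : Fin (k+1) → ℤ))
  map_add' x y := by
    refine Prod.ext ?_ ?_
    · simp only [Prod.fst_add, Prod.snd_add, map_add, Pi.add_apply, Finset.sum_add_distrib]
      simp only [Psi, LinearMap.coe_mk, AddHom.coe_mk, map_add]
      module
    · simp only [Prod.fst_add, Prod.snd_add, map_add, Pi.add_apply, Finset.sum_add_distrib]
      module
  map_smul' r x := by
    refine Prod.ext ?_ ?_
    · simp only [Prod.smul_fst, Prod.smul_snd, map_smul, Pi.smul_apply, ← Finset.smul_sum,
        RingHom.id_apply]
      simp only [Psi, LinearMap.coe_mk, AddHom.coe_mk, map_smul, smul_eq_mul]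
      module
    · simp only [Prod.smul_fst, Prod.smul_snd, map_smul, Pi.smul_apply, ← Finset.smul_sum,
        RingHom.id_apply]
      simp only [smul_eq_mul]
      module

theorem Lam_apply {a k : ℕ} (Z : (Fin a → ℤ) →ₗ[ℤ] (KS (Fin (k+1)) 2 → ℤ)) (c : Fin a → ℤ)
    (c' w : Fin k → ℤ) (w0 α β : ℤ) : Lam Z (c, c', w, w0, α, β) =
    (Z c + Psi k (w, 2 * w0 + α, ∑ i, c' i + β),
    hat c' + (2 * (k:ℤ) - 5) • hat w +
      (2 * ∑ i, w i + (4 * (k:ℤ) - 3) * w0 + (2 * (k:ℤ) - 2) * α) • (1 : Fin (k+1) → ℤ)) := rfl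

theorem Lam_surj {a k : ℕ} (Z : (Fin a → ℤ) →ₗ[ℤ] (KS (Fin (k+1)) 2 → ℤ))
    (hZ : Function.Bijective (Z.coprod (Psi k))) : Function.Surjective (Lam Z) := by
  rintro ⟨f, x⟩
  obtain ⟨⟨c, w, A, B⟩, hf⟩ := hZ.2 f
  rw [LinearMap.coprod_apply] at hf
  simp only at hf
  refine ⟨(c, fun i => x i.succ - (2 * (k:ℤ) - 5) * w i - x 0, w,
    x 0 - 2 * ∑ i, w i - (2 * (k:ℤ) - 2) * A,
    A - 2 * (x 0 - 2 * ∑ i, w i - (2 * (k:ℤ) - 2) * A),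
    B - ∑ i, (x i.succ - (2 * (k:ℤ) - 5) * w i - x 0)), ?_⟩
  rw [Lam_apply]
  refine Prod.ext ?_ ?_
  · simp only
    rw [← hf]
    congr 3
    refine Prod.ext ?_ ?_ <;> ring
  · simp only
    funext i
    refine Fin.cases ?_ (fun j => ?_) i
    · simp [hat_zero]; ring
    · simp [hat_succ]; ring

theorem vec_split {k : ℕ} (x : Fin (k+1) → ℤ) :
    ∃ (w : Fin k → ℤ) (s : ℤ), x = hat w + s • (1 : Fin (k+1) → ℤ) := by
  refine ⟨fun i => x i.succ - x 0, x 0, ?_⟩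
  funext i
  refine Fin.cases ?_ (fun j => ?_) i
  · simp [hat_zero]
  · simp [hat_succ]

theorem first_comp {a k : ℕ} (Z : (Fin a → ℤ) →ₗ[ℤ] (KS (Fin (k+1)) 2 → ℤ))
    (c1 : Fin a → ℤ) (w1 w2 : Fin k → ℤ) (A1 B1 s γ r t : ℤ) :
    r • (Z c1 + Psi k (w1, A1, B1)) + U1 (hat w2 + s • (1 : Fin (k+1) → ℤ)) +
      (γ * t) • (1 : KS (Fin (k+1)) 2 → ℤ) =
    Z (r • c1) + Psi k (r • w1 + w2, r * A1 + 2 * s + γ * t, r * B1) := by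
  simp only [Psi, LinearMap.coe_mk, AddHom.coe_mk, map_add, map_smul, U1_one]
  module

theorem choose_two_int (k : ℕ) : 2 * (((k+1).choose 2 : ℕ) : ℤ) = (k+1) * k := by
  have h := Nat.triangle_succ k
  have : (k+1).choose 2 * 2 = (k+1) * k := by
    rw [Nat.choose_two_right]
    exact Nat.div_mul_cancel (even_iff_two_dvd.1 (by simpa using Nat.even_mul_pred_self (k+1)))
  have : (((k+1).choose 2 * 2 : ℕ) : ℤ) = ((k+1) * k : ℕ) := by rw [this]
  push_cast at this
  linarith

theorem Lam_iff {a k : ℕ} (hk : 5 ≤ k) (Z : (Fin a → ℤ) →ₗ[ℤ] (KS (Fin (k+1)) 2 → ℤ))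
    (hZ0 : ∀ c, ∑ e, Z c e = 0)
    (hZ : Function.Bijective (Z.coprod (Psi k))) (c : Fin a → ℤ)
    (c' w : Fin k → ℤ) (w0 α β : ℤ) : InRel k (Lam Z (c, c', w, w0, α, β)) ↔
      (∀ j, ((k:ℤ) - 5) ∣ c j) ∧ (∀ i, ((2 * (k:ℤ) - 5) * ((k:ℤ) - 5)) ∣ c' i) ∧
      ∃ b γ : ℤ, α = 4 * b + (((k:ℤ) - 1) * (2 * (k:ℤ) - 5)) * γ ∧ β = ((k:ℤ) - 5) * b := by
  have hch := choose_two_int k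
  constructor
  · rintro ⟨⟨f, x⟩, γ, h⟩
    obtain ⟨⟨c1, w1, A1, B1⟩, hf⟩ := hZ.2 f
    obtain ⟨w2, s, rfl⟩ := vec_split x
    rw [LinearMap.coprod_apply] at hf
    simp only at hf
    have hsf : ∑ e, f e = k * ∑ i, w1 i + A1 * ((k+1).choose 2 : ℕ) + B1 := by
      rw [← hf]
      simp only [Pi.add_apply, Finset.sum_add_distrib, hZ0, Psi_sum k hk, zero_add]
    rw [Lam_apply] at h
    have h1 := congrArg Prod.fst h
    have h2 := congrArg Prod.snd h
    simp only [Bp, Prod.fst_add, Prod.snd_add, Prod.smul_fst, Prod.smul_snd] at h1 h2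
    rw [← hf, first_comp] at h1
    have h3 := hZ.1 (a₁ := (c, w, 2 * w0 + α, ∑ i, c' i + β)) (a₂ := (((k:ℤ) - 5) • c1,
      ((k:ℤ) - 5) • w1 + w2, ((k:ℤ) - 5) * A1 + 2 * s + γ * ((k:ℤ)-1), ((k:ℤ) - 5) * B1)) (by
        rw [LinearMap.coprod_apply, LinearMap.coprod_apply]; exact h1)
    simp only [Prod.mk.injEq] at h3
    obtain ⟨e1, e2, e3, e4⟩ := h3
    have hx : ∑ i, (hat w2 + s • (1 : Fin (k+1) → ℤ)) i = ∑ i, w2 i + (k + 1) * s := by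
      simp [Finset.sum_add_distrib, hat_sum]
    rw [hx, hsf] at h2
    have e5 := congrFun h2 0
    simp [hat_zero] at e5
    have e6 : ∀ i, c' i = -((2 * (k:ℤ) - 5) * ((k:ℤ) - 5) * w1 i) := by
      intro i
      have := congrFun h2 i.succ
      simp [hat_succ] at this
      have e2i := congrFun e2 i
      simp at e2i
      linear_combination this - e5 - (2 * (k:ℤ) - 5) * e2i
    have e7 : ∑ i, c' i = -((2 * (k:ℤ) - 5) * ((k:ℤ) - 5) * ∑ i, w1 i) := by
      rw [Finset.mul_sum, ← Finset.sum_neg_distrib]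
      exact Finset.sum_congr rfl fun i _ => e6 i
    have e8 : ∑ i, w i = ((k:ℤ) - 5) * ∑ i, w1 i + ∑ i, w2 i := by
      rw [e2]; simp [Finset.sum_add_distrib, Finset.mul_sum]
    refine ⟨fun j => ⟨c1 j, by rw [e1]; simp⟩, fun i => ⟨- w1 i, by rw [e6]; ring⟩,
      B1 + (2 * (k:ℤ) - 5) * ∑ i, w1 i, 3 * A1 + γ, ?_, ?_⟩
    · linear_combination (-2) * e5 + (4 * (k:ℤ) - 3) * e3 + 4 * e8 + 2 * A1 * hch
    · linear_combination e4 - e7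
  · rintro ⟨h1, h2, b, γ, hα, hβ⟩
    choose c1 hc1 using h1
    choose u hu using h2
    have e7 : ∑ i, c' i = (2 * (k:ℤ) - 5) * ((k:ℤ) - 5) * ∑ i, u i := by
      rw [Finset.mul_sum]
      exact Finset.sum_congr rfl fun i _ => hu i
    have hcc : c = ((k:ℤ)-5) • c1 := by funext j; simp [hc1]
    have hw : w = ((k:ℤ)-5) • (-u) + (w + ((k:ℤ)-5) • u) := by module
    refine ⟨(Z c1 + Psi k (-u, 0, b + (2 * (k:ℤ) - 5) * ∑ i, u i),
      hat (w + ((k:ℤ)-5) • u) + (w0 + 2 * b + γ * ((k:ℤ) - 1) * ((k:ℤ) - 3)) • (1 : Fin (k+1) → ℤ)),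
      γ, ?_⟩
    rw [Lam_apply]
    refine Prod.ext ?_ ?_
    · simp only [Bp, Prod.fst_add, Prod.smul_fst]
      rw [first_comp, ← hcc, ← hw]
      congr 3
      refine Prod.ext ?_ ?_
      · simp only; rw [hα]; ring
      · simp only; rw [e7, hβ]; ring
    · simp only [Bp, Prod.snd_add, Prod.smul_snd]
      have hsf : ∑ e, (Z c1 + Psi k (-u, 0, b + (2 * (k:ℤ) - 5) * ∑ i, u i)) e =
          k * ∑ i, (-u) i + 0 * ((k+1).choose 2 : ℕ) + (b + (2 * (k:ℤ) - 5) * ∑ i, u i) := by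
        simp only [Pi.add_apply, Finset.sum_add_distrib, hZ0, Psi_sum k hk, zero_add]
      have hx : ∀ (w2 : Fin k → ℤ) (s : ℤ), ∑ i, (hat w2 + s • (1 : Fin (k+1) → ℤ)) i =
          ∑ i, w2 i + (k + 1) * s := by
        intro w2 s
        simp [Finset.sum_add_distrib, hat_sum]
      have hww : ∑ i, (w + ((k:ℤ)-5) • u) i = ∑ i, w i + ((k:ℤ)-5) * ∑ i, u i := by
        simp [Finset.sum_add_distrib, Finset.mul_sum]
      have hneg : ∑ i, (-u) i = - ∑ i, u i := by simp
      rw [hx, hsf, hww, hneg]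
      funext i
      refine Fin.cases ?_ (fun j => ?_) i
      · simp [hat_zero]
        rw [hα]; ring
      · simp [hat_succ]
        rw [hα, hu]; ring


/-- Extension of a function on `k`-subsets by zero. -/
def fx {R V : Type*} [Zero R] {k : ℕ} (f : KS V k → R) (s : Finset V) : R :=
  if h : s.card = k then f ⟨s, h⟩ else 0

theorem fx_mk {R V : Type*} [Zero R] {k : ℕ} (f : KS V k → R) (s : Finset V) (h : s.card = k) :
    fx f s = f ⟨s, h⟩ := by simp [fx, h]

theorem fx_val {R V : Type*} [Zero R] {k : ℕ} (f : KS V k → R) (s : KS V k) :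
    fx f s.1 = f s := by simp [fx, s.2]

theorem fx_add {R V : Type*} [AddCommMonoid R] {k : ℕ} (f g : KS V k → R) (s : Finset V) :
    fx (f + g) s = fx f s + fx g s := by unfold fx; split_ifs <;> simp

theorem fx_smul {R V : Type*} [CommRing R] {k : ℕ} (c : R) (f : KS V k → R) (s : Finset V) :
    fx (c • f) s = c * fx f s := by unfold fx; split_ifs <;> simp

theorem sum_flag {V R : Type*} [Fintype V] [DecidableEq V] [AddCommMonoid R] (k : ℕ)
    (G : Finset V → Finset V → R) :
    ∑ T : KS V (k+1), ∑ a ∈ T.1, G T.1 (T.1.erase a) =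
      ∑ S : KS V k, ∑ a ∈ S.1ᶜ, G (insert a S.1) S.1 := by
  rw [Finset.sum_sigma', Finset.sum_sigma']
  refine Finset.sum_bij (fun p hp => ⟨⟨p.1.1.erase p.2, by
    simp only [Finset.mem_sigma, Finset.mem_univ, true_and] at hp
    rw [Finset.card_erase_of_mem hp, p.1.2]; rfl⟩, p.2⟩) ?_ ?_ ?_ ?_
  · intro p hp; simp
  · rintro ⟨⟨T, hT⟩, a⟩ h1 ⟨⟨T', hT'⟩, a'⟩ h2 h
    simp only [Sigma.mk.injEq, Subtype.mk.injEq, heq_eq_eq] at h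
    obtain ⟨h, rfl⟩ := h
    simp only [Finset.mem_sigma, Finset.mem_univ, true_and] at h1 h2
    have : T = T' := by rw [← Finset.insert_erase h1, h, Finset.insert_erase h2]
    subst this; rfl
  · rintro ⟨⟨S, hS⟩, a⟩ h
    simp only [Finset.mem_sigma, Finset.mem_univ, true_and, Finset.mem_compl] at h
    refine ⟨⟨⟨insert a S, by rw [Finset.card_insert_of_notMem h, hS]⟩, a⟩, by simp, ?_⟩
    simp only [Finset.erase_insert h]
  · rintro ⟨⟨T, hT⟩, a⟩ h1
    simp only [Finset.mem_sigma, Finset.mem_univ, true_and] at h1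
    simp only [Finset.insert_erase h1]

section ops
variable {V : Type*} [Fintype V] [DecidableEq V] (R : Type*) [CommRing R]

def Up : (KS V 2 → R) →ₗ[R] (KS V 3 → R) where
  toFun f T := ∑ a ∈ T.1, fx f (T.1.erase a)
  map_add' f g := by funext T; simp [fx_add, Finset.sum_add_distrib]
  map_smul' c f := by funext T; simp [fx_smul, Finset.mul_sum]

def Dn : (KS V 3 → R) →ₗ[R] (KS V 2 → R) where
  toFun g S := ∑ a ∈ S.1ᶜ, fx g (insert a S.1)
  map_add' f g := by funext T; simp [fx_add, Finset.sum_add_distrib]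
  map_smul' c f := by funext T; simp [fx_smul, Finset.mul_sum]

variable {R}

theorem Up_apply (f : KS V 2 → R) (T : KS V 3) : Up R f T = ∑ a ∈ T.1, fx f (T.1.erase a) := rfl
theorem Dn_apply (g : KS V 3 → R) (S : KS V 2) : Dn R g S = ∑ a ∈ S.1ᶜ, fx g (insert a S.1) := rfl

theorem adj (f : KS V 2 → R) (g : KS V 3 → R) :
    ∑ T, Up R f T * g T = ∑ S, f S * Dn R g S := by
  have := sum_flag (V := V) 2 (fun T S => fx f S * fx g T)
  simp only [Up_apply, Dn_apply, Finset.sum_mul, Finset.mul_sum]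
  simp only [fx_val] at this
  exact this

theorem Dn_sum (g : KS V 3 → R) : ∑ S, Dn R g S = 3 * ∑ T, g T := by
  have := sum_flag (V := V) 2 (fun T S => fx g T)
  simp only [Dn_apply]
  rw [← this, Finset.mul_sum]
  refine Finset.sum_congr rfl fun T _ => ?_
  rw [Finset.sum_const, fx_val, T.2]
  simp

theorem Up_triple (f : KS V 2 → R) (a b c : V) (hab : a ≠ b) (hac : a ≠ c) (hbc : b ≠ c)
    (h : ({a, b, c} : Finset V).card = 3) :
    Up R f ⟨{a, b, c}, h⟩ = fx f {b, c} + fx f {a, c} + fx f {a, b} := by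
  rw [Up_apply]
  simp only
  rw [Finset.sum_insert (by simp [hab, hac]), Finset.sum_pair hbc]
  have e1 : ({a, b, c} : Finset V).erase a = {b, c} := Finset.erase_insert (by simp [hab, hac])
  have e2 : ({a, b, c} : Finset V).erase b = {a, c} := by
    ext x; simp only [Finset.mem_erase, Finset.mem_insert, Finset.mem_singleton]; grind
  have e3 : ({a, b, c} : Finset V).erase c = {a, b} := by
    ext x; simp only [Finset.mem_erase, Finset.mem_insert, Finset.mem_singleton]; grind
  rw [e1, e2, e3, add_assoc]

theorem Up_one : Up R (1 : KS V 2 → R) = (3 : R) • (1 : KS V 3 → R) := by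
  funext T
  rw [Up_apply]
  rw [Finset.sum_congr rfl (g := fun _ => (1:R))]
  · simp [T.2]
  · intro a ha
    rw [fx_mk _ _ (by rw [Finset.card_erase_of_mem ha, T.2])]; rfl

theorem Dn_one : Dn R (1 : KS V 3 → R) = ((Fintype.card V : R) - 2) • (1 : KS V 2 → R) := by
  funext S
  rw [Dn_apply]
  rw [Finset.sum_congr rfl (g := fun _ => (1:R))]
  · have : (S.1ᶜ).card + 2 = Fintype.card V := by
      have := Finset.card_compl_add_card S.1; rwa [S.2] at this
    simp [← this]
  · intro a ha
    rw [fx_mk _ _ (by rw [Finset.card_insert_of_notMem (Finset.mem_compl.1 ha), S.2])]; rfl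

theorem UD_apply (g : KS V 3 → R) (T : KS V 3) :
    Up R (Dn R g) T = 3 * g T + ∑ a ∈ T.1, ∑ b ∈ T.1ᶜ, fx g (insert b (T.1.erase a)) := by
  rw [Up_apply]
  have : ∀ a ∈ T.1, fx (Dn R g) (T.1.erase a) =
      g T + ∑ b ∈ T.1ᶜ, fx g (insert b (T.1.erase a)) := by
    intro a ha
    rw [fx_mk _ _ (by rw [Finset.card_erase_of_mem ha, T.2]), Dn_apply]
    simp only
    have e : (T.1.erase a)ᶜ = insert a T.1ᶜ := by
      rw [Finset.compl_erase]
    rw [e, Finset.sum_insert (by simpa using ha), Finset.insert_erase ha, fx_val]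
  rw [Finset.sum_congr rfl this, Finset.sum_add_distrib, Finset.sum_const, T.2]
  simp

/-- degree -/
def deg (v : KS V 2 → R) (a : V) : R := ∑ c, fx v {a, c}

theorem DU_pair (f : KS V 2 → R) (x y : V) (hxy : x ≠ y) (h : ({x, y} : Finset V).card = 2) :
    Dn R (Up R f) ⟨{x, y}, h⟩ = ((Fintype.card V : R) - 4) * fx f {x, y} + deg f x + deg f y := by
  rw [Dn_apply]
  simp only
  have e1 : ∀ a ∈ ({x, y} : Finset V)ᶜ, fx (Up R f) (insert a {x, y}) =
      fx f {x, y} + fx f {y, a} + fx f {x, a} := by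
    intro a ha
    simp only [Finset.mem_compl, Finset.mem_insert, Finset.mem_singleton, not_or] at ha
    rw [fx_mk _ _ (by rw [Finset.card_insert_of_notMem (by simp [ha]), h]),
      Up_triple f a x y ha.1 ha.2 hxy, Finset.pair_comm a y, Finset.pair_comm a x]
  have hc : ((({x, y} : Finset V)ᶜ).card : R) = (Fintype.card V : R) - 2 := by
    have := Finset.card_compl_add_card ({x, y} : Finset V)
    rw [h] at this
    rw [← this]; simp
  have hz : ∀ a : V, fx f ({a, a} : Finset V) = 0 := by
    intro a; simp [fx]
  have e2 : ∀ z : V, ∑ a ∈ ({x, y} : Finset V)ᶜ, fx f {z, a} = deg f z - fx f {z, x} - fx f {z, y} := by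
    intro z
    have := Finset.sum_compl_add_sum ({x, y} : Finset V) (fun a => fx f {z, a})
    rw [Finset.sum_pair hxy] at this
    rw [deg, ← this]; ring
  rw [Finset.sum_congr rfl e1, Finset.sum_add_distrib, Finset.sum_add_distrib, e2, e2,
    Finset.sum_const, hz, hz, Finset.pair_comm y x, nsmul_eq_mul, hc]
  ring

theorem handshake (f : KS V 2 → R) : ∑ a, deg f a = 2 * ∑ e, f e := by
  have := sum_ks2 (V := V) (fun _ e => fx f e)
  simp only [fx_val, Finset.sum_const] at this
  have hz : ∀ a : V, fx f ({a, a} : Finset V) = 0 := by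
    intro a; simp [fx]
  have e : ∀ a, ∑ b ∈ Finset.univ.erase a, fx f {a, b} = deg f a := by
    intro a
    rw [deg, ← Finset.add_sum_erase Finset.univ _ (Finset.mem_univ a), hz, zero_add]
  simp only [e] at this
  rw [← this, Finset.mul_sum]
  refine Finset.sum_congr rfl fun T _ => ?_
  rw [T.2]; simp

theorem kneser {G : Type*} [AddCommGroup G] (hG : ∀ x : G, (3:ℤ) • x = 0)
    (hV : 6 ≤ Fintype.card V) (v : KS V 2 → G)
    (h : ∀ a b c : V, a ≠ b → a ≠ c → b ≠ c → fx v {b, c} + fx v {a, c} + fx v {a, b} = 0)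
    (e e' : KS V 2) : v e = v e' := by
  have dis : ∀ e e' : KS V 2, Disjoint e.1 e'.1 → v e = v e' := by
    rintro ⟨e, he⟩ ⟨e', he'⟩ hd
    obtain ⟨a, b, hab, rfl⟩ := Finset.card_eq_two.1 he
    obtain ⟨c, d, hcd, rfl⟩ := Finset.card_eq_two.1 he'
    simp only [Finset.disjoint_insert_left, Finset.disjoint_singleton_left, Finset.mem_insert,
      Finset.mem_singleton, not_or] at hd
    obtain ⟨⟨hac, had⟩, hbc, hbd⟩ := hd
    have h1 := h a b c hab hac hbc
    have h2 := h a b d hab had hbd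
    have h3 := h a c d hac had hcd
    have h4 := h b c d hbc hbd hcd
    rw [← fx_mk v, ← fx_mk v]
    have h5 : (2:ℤ) • (fx v {a, b} - fx v {c, d}) = 0 := by
      have : (2:ℤ) • (fx v {a, b} - fx v {c, d}) =
        (fx v {b, c} + fx v {a, c} + fx v {a, b}) + (fx v {b, d} + fx v {a, d} + fx v {a, b})
        - (fx v {c, d} + fx v {a, d} + fx v {a, c}) - (fx v {c, d} + fx v {b, d} + fx v {b, c}) := by
        abel
      rw [this, h1, h2, h3, h4]; simp
    have h6 := hG (fx v {a, b} - fx v {c, d})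
    have h7 : fx v {a, b} - fx v {c, d} = (3:ℤ) • (fx v {a, b} - fx v {c, d}) -
      (2:ℤ) • (fx v {a, b} - fx v {c, d}) := by abel
    rw [h5, h6, sub_zero] at h7
    exact sub_eq_zero.1 h7
  have hc : 2 ≤ ((e.1 ∪ e'.1)ᶜ).card := by
    have h1 := Finset.card_compl_add_card (e.1 ∪ e'.1)
    have h2 := Finset.card_union_le e.1 e'.1
    rw [e.2, e'.2] at h2
    omega
  obtain ⟨s, hs, hs2⟩ := Finset.exists_subset_card_eq hc
  have d1 : Disjoint (e.1 ∪ e'.1) s := (Finset.subset_compl_iff_disjoint_left.1 hs)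
  rw [Finset.disjoint_union_left] at d1
  rw [dis e ⟨s, hs2⟩ d1.1, dis e' ⟨s, hs2⟩ d1.2]

end ops


section grp
variable (V : Type*) [Fintype V] [DecidableEq V]

def Aop : (KS V 3 → ℤ) →ₗ[ℤ] (KS V 3 → ℤ) := (Up ℤ).comp (Dn ℤ) - (3:ℤ) • LinearMap.id
def BB : (KS V 2 → ℤ) →ₗ[ℤ] (KS V 2 → ℤ) := (Dn ℤ).comp (Up ℤ) - (3:ℤ) • LinearMap.id

abbrev NN := (KS V 3 → ℤ) ⧸ LinearMap.range (Aop V)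

def ss : (KS V 2 → ℤ) →ₗ[ℤ] NN V := (LinearMap.range (Aop V)).mkQ.comp (Up ℤ)

variable {V}

theorem Aop_apply (x : KS V 3 → ℤ) : Aop V x = Up ℤ (Dn ℤ x) - (3:ℤ) • x := rfl
theorem BB_apply (x : KS V 2 → ℤ) : BB V x = Dn ℤ (Up ℤ x) - (3:ℤ) • x := rfl

theorem ss_eq_zero (y : KS V 2 → ℤ) : ss V y = 0 ↔ ∃ z, Aop V z = Up ℤ y := by
  rw [ss, LinearMap.comp_apply, Submodule.mkQ_apply, Submodule.Quotient.mk_eq_zero]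
  rfl

theorem ss_iff (hV : 6 ≤ Fintype.card V) (y : KS V 2 → ℤ) : ss V y = 0 ↔
    ∃ v γ, y = BB V v + (γ * ((Fintype.card V : ℤ) - 3)) • (1 : KS V 2 → ℤ) := by
  rw [ss_eq_zero]
  constructor
  · rintro ⟨z, hz⟩
    rw [Aop_apply] at hz
    have h3 : Up ℤ (Dn ℤ z - y) = (3:ℤ) • z := by
      rw [map_sub, ← hz]; abel
    set v := Dn ℤ z - y with hv
    have hk := kneser (V := V) (G := ZMod 3) (by intro x; revert x; decide) hV
      (fun e => ((v e : ℤ) : ZMod 3)) (by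
        intro a b c hab hac hbc
        have hcard : ({a, b, c} : Finset V).card = 3 := Finset.card_eq_three.2 ⟨a, b, c, hab, hac, hbc, rfl⟩
        have := congrFun h3 ⟨{a, b, c}, hcard⟩
        rw [Up_triple v a b c hab hac hbc] at this
        rw [fx_mk _ _ (Finset.card_pair hbc), fx_mk _ _ (Finset.card_pair hac),
          fx_mk _ _ (Finset.card_pair hab)] at this ⊢
        have h' := congrArg (fun t : ℤ => (t : ZMod 3)) this
        simp only [Pi.smul_apply, smul_eq_mul, Int.cast_add, Int.cast_mul] at h'
        rw [h']
        have : ((3:ℤ) : ZMod 3) = 0 := by decide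
        rw [this, zero_mul])
    obtain ⟨s, hs, hs2⟩ := Finset.exists_subset_card_eq (s := (Finset.univ : Finset V)) (n := 2)
      (by rw [Finset.card_univ]; omega)
    set γ := v ⟨s, hs2⟩
    have hd : ∀ e, ∃ t, v e = 3 * t + γ := by
      intro e
      have := hk e ⟨s, hs2⟩
      rw [← sub_eq_zero, ← Int.cast_sub, ZMod.intCast_zmod_eq_zero_iff_dvd] at this
      obtain ⟨t, ht⟩ := this
      exact ⟨t, by push_cast at ht; linarith⟩
    choose v' hv' using hd
    have hvv : v = (3:ℤ) • v' + γ • 1 := by funext e; simp [hv']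
    have hz2 : z = Up ℤ v' + γ • 1 := by
      rw [hvv, map_add, map_smul, map_smul, Up_one] at h3
      have : (3:ℤ) • z = (3:ℤ) • (Up ℤ v' + γ • 1) := by rw [← h3]; module
      exact smul_right_injective _ (by norm_num : (3:ℤ) ≠ 0) this
    refine ⟨v', γ, ?_⟩
    have : y = Dn ℤ z - v := by rw [hv]; abel
    rw [this, hvv, hz2, map_add, map_smul, Dn_one, BB_apply]
    push_cast
    module
  · rintro ⟨v, γ, rfl⟩
    refine ⟨Up ℤ v + γ • 1, ?_⟩
    rw [Aop_apply, BB_apply]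
    simp only [map_add, map_sub, map_smul, Dn_one, Up_one]
    push_cast
    module

theorem three_mk (x : KS V 3 → ℤ) :
    (3:ℤ) • (LinearMap.range (Aop V)).mkQ x = ss V (Dn ℤ x) := by
  rw [ss, LinearMap.comp_apply, ← map_smul, ← sub_eq_zero, ← map_sub, Submodule.mkQ_apply,
    Submodule.Quotient.mk_eq_zero]
  refine ⟨-x, ?_⟩
  rw [Aop_apply, map_neg, map_neg]; module

theorem ss_three (hV : 6 ≤ Fintype.card V) (y : KS V 2 → ℤ)
    (h : 3 ∣ ∑ e, y e ∨ Fintype.card V % 3 = 2) : ∃ x, (3:ℤ) • x = ss V y := by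
  let T3 : NN V →ₗ[ℤ] NN V := (3:ℤ) • LinearMap.id
  let G := NN V ⧸ LinearMap.range T3
  let q : NN V →ₗ[ℤ] G := (LinearMap.range T3).mkQ
  have hG : ∀ x : G, (3:ℤ) • x = 0 := by
    intro x
    obtain ⟨m, rfl⟩ := Submodule.mkQ_surjective _ x
    rw [← map_smul, Submodule.mkQ_apply, Submodule.Quotient.mk_eq_zero]
    exact ⟨m, rfl⟩
  have hq : ∀ m : NN V, q m = 0 → ∃ x, (3:ℤ) • x = m := by
    intro m hm
    simp only [q] at hm
    rw [Submodule.mkQ_apply, Submodule.Quotient.mk_eq_zero] at hm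
    exact hm
  let v : KS V 2 → G := fun e => q (ss V (Pi.single e 1))
  have hv : ∀ y : KS V 2 → ℤ, q (ss V y) = ∑ e, y e • v e := by
    intro y
    have : y = ∑ e, y e • (Pi.single e 1 : KS V 2 → ℤ) := by
      funext e; simp [Finset.sum_apply, Pi.single_apply]
    conv_lhs => rw [this]
    simp only [map_sum, map_smul, v]
  have hk := kneser hG hV v (by
    intro a b c hab hac hbc
    have hcard : ({a, b, c} : Finset V).card = 3 := Finset.card_eq_three.2 ⟨a, b, c, hab, hac, hbc, rfl⟩
    have e : (Dn ℤ (Pi.single ⟨{a, b, c}, hcard⟩ 1 : KS V 3 → ℤ)) =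
        Pi.single ⟨{b, c}, Finset.card_pair hbc⟩ 1 + Pi.single ⟨{a, c}, Finset.card_pair hac⟩ 1
          + Pi.single ⟨{a, b}, Finset.card_pair hab⟩ 1 := by
      funext S
      have h1 := adj (Pi.single S 1) (Pi.single ⟨{a, b, c}, hcard⟩ 1 : KS V 3 → ℤ)
      rw [Finset.sum_eq_single ⟨{a, b, c}, hcard⟩ (by
        intro T _ hT; rw [Pi.single_eq_of_ne hT, mul_zero]) (by simp),
        Finset.sum_eq_single S (by
        intro T _ hT; rw [Pi.single_eq_of_ne hT, zero_mul]) (by simp),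
        Pi.single_eq_same, Pi.single_eq_same, one_mul, mul_one, Up_triple _ a b c hab hac hbc,
        fx_mk _ _ (Finset.card_pair hbc), fx_mk _ _ (Finset.card_pair hac),
          fx_mk _ _ (Finset.card_pair hab)] at h1
      rw [← h1]
      simp only [Pi.add_apply, Pi.single_apply]
      simp only [eq_comm]
    rw [fx_mk _ _ (Finset.card_pair hbc), fx_mk _ _ (Finset.card_pair hac),
          fx_mk _ _ (Finset.card_pair hab)]
    simp only [v]
    rw [← map_add, ← map_add, ← map_add, ← map_add, ← e, ← three_mk, map_smul]
    exact hG _)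
  obtain ⟨s, hs, hs2⟩ := Finset.exists_subset_card_eq (s := (Finset.univ : Finset V)) (n := 2)
      (by rw [Finset.card_univ]; omega)
  set ρ := v ⟨s, hs2⟩ with hρ
  have hv2 : ∀ y : KS V 2 → ℤ, q (ss V y) = (∑ e, y e) • ρ := by
    intro y
    rw [hv, Finset.sum_smul]
    exact Finset.sum_congr rfl fun e _ => by rw [hk e ⟨s, hs2⟩]
  have hG3 : ∀ (z : ℤ) (x : G), 3 ∣ z → z • x = 0 := by
    rintro z x ⟨t, rfl⟩
    rw [mul_comm, mul_smul, hG, smul_zero]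
  refine hq _ ?_
  rw [hv2]
  rcases h with h | h
  · exact hG3 _ _ h
  · have h0 : ss V (((Fintype.card V : ℤ) - 3) • (1 : KS V 2 → ℤ)) = 0 := by
      rw [ss_iff hV]
      exact ⟨0, 1, by simp⟩
    have h1 := hv2 (((Fintype.card V : ℤ) - 3) • (1 : KS V 2 → ℤ))
    rw [h0, map_zero] at h1
    have hc : ∑ e, (((Fintype.card V : ℤ) - 3) • (1 : KS V 2 → ℤ)) e =
        ((Fintype.card V : ℤ) - 3) * ((Fintype.card V).choose 2 : ℕ) := by
      have := card_KS (V := V) 2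
      simp only [Pi.smul_apply, Pi.one_apply, smul_eq_mul, mul_one, Finset.sum_const,
        Finset.card_univ, this]
      simp [mul_comm]
    rw [hc] at h1
    have h2 : (3:ℤ) ∣ ((Fintype.card V : ℤ) - 3) * ((Fintype.card V).choose 2 : ℕ) + 1 := by
      have := choose_two_int (Fintype.card V - 1)
      rw [Nat.sub_add_cancel (by omega)] at this
      obtain ⟨m, hm⟩ : ∃ m, Fintype.card V = 3 * m + 2 := ⟨Fintype.card V / 3, by omega⟩
      rw [Nat.cast_sub (by omega)] at this
      rw [hm] at this ⊢
      push_cast at this ⊢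
      generalize (((3 * m + 2).choose 2 : ℕ) : ℤ) = C at this ⊢
      have h5 : 2 * C = 9 * ((m:ℤ) * m) + 9 * m + 2 := by rw [this]; ring
      obtain ⟨t, rfl⟩ : ∃ t, C = 3 * t + 1 := ⟨(C - 1) / 3, by omega⟩
      exact ⟨3 * m * t + m - t, by ring⟩
    have h3 := hG3 _ ρ h2
    rw [add_smul, ← h1, one_smul, zero_add] at h3
    rw [h3, smul_zero]

end grp


section cnt
variable {V : Type*} [Fintype V] [DecidableEq V]

theorem fx_cast {k : ℕ} (f : KS V k → ℤ) (s : Finset V) :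
    fx (fun e => ((f e : ℤ) : ZMod 3)) s = ((fx f s : ℤ) : ZMod 3) := by
  unfold fx; split_ifs <;> simp

theorem Up_cast (f : KS V 2 → ℤ) (T : KS V 3) :
    Up (ZMod 3) (fun e => ((f e : ℤ) : ZMod 3)) T = ((Up ℤ f T : ℤ) : ZMod 3) := by
  simp [Up_apply, fx_cast]

theorem Dn_cast (g : KS V 3 → ℤ) :
    Dn (ZMod 3) (fun e => ((g e : ℤ) : ZMod 3)) = fun e => ((Dn ℤ g e : ℤ) : ZMod 3) := by
  funext e
  simp [Dn_apply, fx_cast]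

theorem selfadj (x g : KS V 3 → ZMod 3) :
    ∑ T, Up (ZMod 3) (Dn (ZMod 3) x) T * g T = ∑ T, x T * Up (ZMod 3) (Dn (ZMod 3) g) T := by
  rw [adj]
  have := adj (R := ZMod 3) (Dn (ZMod 3) g) x
  simp only [mul_comm (x _)]
  rw [this]
  exact Finset.sum_congr rfl fun _ _ => mul_comm _ _

theorem Aop_cast (x : KS V 3 → ℤ) (T : KS V 3) : ((Aop V x T : ℤ) : ZMod 3) =
    Up (ZMod 3) (Dn (ZMod 3) (fun e => ((x e : ℤ) : ZMod 3))) T := by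
  rw [Dn_cast, Up_cast, Aop_apply]
  have : (3 : ZMod 3) = 0 := by decide
  simp [this]

theorem lc_Aop (x : KS V 3 → ℤ) (g : KS V 3 → ZMod 3) :
    ∑ T, Aop V x T • g T = ∑ T, x T • Up (ZMod 3) (Dn (ZMod 3) g) T := by
  simp only [zsmul_eq_mul]
  rw [← selfadj]
  exact Finset.sum_congr rfl fun T _ => by rw [Aop_cast]

theorem hc_NN_ker : hc (NN V) =
    Nat.card {g : KS V 3 → ZMod 3 // Up (ZMod 3) (Dn (ZMod 3) g) = 0} := by
  have key : ∀ φ : (KS V 3 → ℤ) →ₗ[ℤ] ZMod 3, ∀ x, φ x = ∑ T, x T • φ (Pi.single T 1) := by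
    intro φ x
    have : x = ∑ e, x e • (Pi.single e 1 : KS V 3 → ℤ) := by
      funext e; simp [Finset.sum_apply, Pi.single_apply]
    conv_lhs => rw [this]
    simp only [map_sum, map_smul]
  rw [hc]
  refine Nat.card_congr (Equiv.ofBijective (fun φ => ⟨fun T => φ ((LinearMap.range (Aop V)).mkQ
    (Pi.single T 1)), ?_⟩) ⟨?_, ?_⟩)
  · funext T
    have h1 := lc_Aop (Pi.single T 1) (fun T => φ ((LinearMap.range (Aop V)).mkQ (Pi.single T 1)))
    have h2 := key (φ.comp (LinearMap.range (Aop V)).mkQ) (Aop V (Pi.single T 1))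
    simp only [LinearMap.comp_apply] at h2
    rw [← h2] at h1
    have h3 : (LinearMap.range (Aop V)).mkQ (Aop V (Pi.single T 1)) = 0 := by
      rw [Submodule.mkQ_apply, Submodule.Quotient.mk_eq_zero]; exact ⟨_, rfl⟩
    rw [h3, map_zero, Finset.sum_eq_single T (by
      intro T' _ hT; rw [Pi.single_eq_of_ne hT, zero_smul]) (by simp), Pi.single_eq_same,
      one_smul] at h1
    exact h1.symm
  · intro φ φ' h
    simp only [Subtype.mk.injEq] at h
    refine Submodule.linearMap_qext _ (LinearMap.ext fun x => ?_)
    rw [key, key (φ'.comp _)]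
    exact Finset.sum_congr rfl fun T _ => by
      simp only [LinearMap.comp_apply]; rw [congrFun h T]
  · rintro ⟨g, hg⟩
    refine ⟨(LinearMap.range (Aop V)).liftQ (Fintype.linearCombination ℤ g) ?_, ?_⟩
    · rintro _ ⟨x, rfl⟩
      rw [LinearMap.mem_ker, Fintype.linearCombination_apply, lc_Aop, hg]
      simp
    · apply Subtype.ext
      funext T
      simp only [Submodule.mkQ_apply, Submodule.liftQ_apply]
      simp [Fintype.linearCombination_apply, Pi.single_apply]

theorem ker_Up (hV : 6 ≤ Fintype.card V) (v : KS V 2 → ZMod 3) :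
    Up (ZMod 3) v = 0 ↔ ∃ c : ZMod 3, v = c • 1 := by
  constructor
  · intro h
    obtain ⟨s, hs, hs2⟩ := Finset.exists_subset_card_eq (s := (Finset.univ : Finset V)) (n := 2)
      (by rw [Finset.card_univ]; omega)
    refine ⟨v ⟨s, hs2⟩, ?_⟩
    funext e
    have := kneser (V := V) (G := ZMod 3) (by intro x; revert x; decide) hV v (by
      intro a b c hab hac hbc
      have hcard : ({a, b, c} : Finset V).card = 3 := Finset.card_eq_three.2 ⟨a, b, c, hab, hac, hbc, rfl⟩
      have := congrFun h ⟨{a, b, c}, hcard⟩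
      rwa [Up_triple v a b c hab hac hbc] at this) e ⟨s, hs2⟩
    simp [this]
  · rintro ⟨c, rfl⟩
    have : (3 : ZMod 3) = 0 := by decide
    rw [map_smul, Up_one, this, zero_smul, smul_zero]

theorem rank_UD : Module.finrank (ZMod 3) (LinearMap.range (Up (V := V) (ZMod 3))) =
    Module.finrank (ZMod 3) (LinearMap.range (Dn (V := V) (ZMod 3))) := by
  have h : LinearMap.toMatrix' (Dn (V := V) (ZMod 3)) = Matrix.transpose (LinearMap.toMatrix' (Up (V := V) (ZMod 3))) := by
    ext S T
    rw [Matrix.transpose_apply, LinearMap.toMatrix'_apply, LinearMap.toMatrix'_apply]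
    have h1 := adj (R := ZMod 3) (Pi.single S 1) (Pi.single T 1 : KS V 3 → ZMod 3)
    rw [Finset.sum_eq_single T (by
        intro T _ hT; rw [Pi.single_eq_of_ne hT, mul_zero]) (by simp),
        Finset.sum_eq_single S (by
        intro T _ hT; rw [Pi.single_eq_of_ne hT, zero_mul]) (by simp),
        Pi.single_eq_same, Pi.single_eq_same, one_mul, mul_one] at h1
    convert h1.symm using 2
  have h2 := Matrix.rank_transpose (LinearMap.toMatrix' (Up (V := V) (ZMod 3)))
  rw [← h] at h2
  rw [Matrix.rank, Matrix.rank] at h2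
  rw [← Matrix.toLin'_apply', ← Matrix.toLin'_apply', Matrix.toLin'_toMatrix', Matrix.toLin'_toMatrix'] at h2
  exact h2.symm

theorem ker_Up_finrank (hV : 6 ≤ Fintype.card V) :
    Module.finrank (ZMod 3) (LinearMap.ker (Up (V := V) (ZMod 3))) = 1 := by
  obtain ⟨s, hs, hs2⟩ := Finset.exists_subset_card_eq (s := (Finset.univ : Finset V)) (n := 2)
      (by rw [Finset.card_univ]; omega)
  have h1 : (1 : KS V 2 → ZMod 3) ≠ 0 := fun h => by
    have := congrFun h ⟨s, hs2⟩
    simp at this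
  have : LinearMap.ker (Up (V := V) (ZMod 3)) = Submodule.span (ZMod 3) {1} := by
    ext v
    rw [LinearMap.mem_ker, ker_Up hV, Submodule.mem_span_singleton]
    simp only [eq_comm]
  rw [this, finrank_span_singleton h1]

theorem ker_Dn_card (hV : 6 ≤ Fintype.card V) (t : ℕ)
    (ht : t + (Fintype.card V).choose 2 = (Fintype.card V).choose 3 + 1) :
    Nat.card (LinearMap.ker (Dn (V := V) (ZMod 3))) = 3 ^ t := by
  have h1 := LinearMap.finrank_range_add_finrank_ker (Up (V := V) (ZMod 3))
  have h2 := LinearMap.finrank_range_add_finrank_ker (Dn (V := V) (ZMod 3))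
  rw [ker_Up_finrank hV, Module.finrank_pi, card_KS, rank_UD] at h1
  rw [Module.finrank_pi, card_KS] at h2
  have : Module.finrank (ZMod 3) (LinearMap.ker (Dn (V := V) (ZMod 3))) = t := by omega
  rw [Module.natCard_eq_pow_finrank (K := ZMod 3), this, Nat.card_zmod]

theorem one_sum2 : ∑ e, (1 : KS V 2 → ZMod 3) e = ((Fintype.card V).choose 2 : ℕ) := by
  have := card_KS (V := V) 2
  simp only [Pi.one_apply, Finset.sum_const, Finset.card_univ, this]
  simp

theorem hc_NN (hV : 6 ≤ Fintype.card V) (t : ℕ)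
    (ht : t + (Fintype.card V).choose 2 = (Fintype.card V).choose 3 + 1) :
    hc (NN V) = 3 ^ t * (if Fintype.card V % 3 = 2 then 1 else 3) := by
  rw [hc_NN_ker, ← ker_Dn_card hV t ht]
  have h30 : (3 : ZMod 3) = 0 := by decide
  split_ifs with h
  · rw [mul_one]
    refine Nat.card_congr (Equiv.subtypeEquivRight fun g => ?_)
    rw [LinearMap.mem_ker, ker_Up hV]
    constructor
    · rintro ⟨c, hc⟩
      have h1 := Dn_sum (R := ZMod 3) g
      rw [h30, zero_mul, hc] at h1
      simp only [Pi.smul_apply, smul_eq_mul, ← Finset.mul_sum, one_sum2] at h1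
      have h2 : (((Fintype.card V).choose 2 : ℕ) : ZMod 3) = 1 := by
        have := choose_two_int (Fintype.card V - 1)
        rw [Nat.sub_add_cancel (by omega)] at this
        obtain ⟨m, hm⟩ : ∃ m, Fintype.card V = 3 * m + 2 := ⟨Fintype.card V / 3, by omega⟩
        rw [Nat.cast_sub (by omega)] at this
        rw [hm] at this ⊢
        generalize (3 * m + 2).choose 2 = C at this ⊢
        push_cast at this
        have h5 : 2 * (C:ℤ) = 9 * ((m:ℤ) * m) + 9 * m + 2 := by rw [this]; ring
        obtain ⟨t, rfl⟩ : ∃ t, C = 3 * t + 1 := ⟨(C - 1) / 3, by omega⟩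
        push_cast
        rw [h30]; ring
      rw [h2, mul_one] at h1
      rw [hc, h1, zero_smul]
    · intro h; exact ⟨0, by rw [h, zero_smul]⟩
  · have hn2 : ((Fintype.card V : ZMod 3) - 2) ≠ 0 := by
      intro h0
      rw [sub_eq_zero] at h0
      have : ((Fintype.card V : ℕ) : ZMod 3) = ((2:ℕ) : ZMod 3) := by rw [h0]; rfl
      rw [ZMod.natCast_eq_natCast_iff'] at this
      exact h this
    have : ∀ x : ℕ, x * 3 = x * Nat.card (ZMod 3) := by intro x; simp
    rw [this, ← Nat.card_prod]
    symm
    refine Nat.card_congr (Equiv.ofBijective (fun p => ⟨p.1.1 + p.2 • 1, ?_⟩) ⟨?_, ?_⟩)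
    · rw [map_add, p.1.2, zero_add, map_smul, Dn_one, map_smul, map_smul, Up_one, h30]
      simp
    · rintro ⟨⟨g, hg⟩, c⟩ ⟨⟨g', hg'⟩, c'⟩ hh
      simp only [Subtype.mk.injEq] at hh
      have h1 := congrArg (Dn (ZMod 3)) hh
      rw [LinearMap.mem_ker] at hg hg'
      rw [map_add, map_add, hg, hg', map_smul, map_smul, Dn_one, zero_add, zero_add] at h1
      obtain ⟨s, hs, hs2⟩ := Finset.exists_subset_card_eq (s := (Finset.univ : Finset V)) (n := 2)
        (by rw [Finset.card_univ]; omega)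
      have h2 := congrFun h1 ⟨s, hs2⟩
      simp only [Pi.smul_apply, Pi.one_apply, smul_eq_mul, mul_one] at h2
      have h3 := mul_right_cancel₀ hn2 h2
      subst h3
      have h4 := add_right_cancel hh
      subst h4
      rfl
    · rintro ⟨g, hg⟩
      rw [ker_Up hV] at hg
      obtain ⟨c, hc⟩ := hg
      refine ⟨(⟨g - (c * ((Fintype.card V : ZMod 3) - 2)⁻¹) • 1, ?_⟩,
        c * ((Fintype.card V : ZMod 3) - 2)⁻¹), ?_⟩
      · rw [LinearMap.mem_ker, map_sub, map_smul, Dn_one, hc, smul_smul, mul_assoc,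
          inv_mul_cancel₀ hn2, mul_one, sub_self]
      · simp

end cnt


section kappa

theorem deg_BB {V : Type*} [Fintype V] [DecidableEq V] (v : KS V 2 → ℤ) (a : V) :
    deg (BB V v) a = (2 * (Fintype.card V : ℤ) - 9) * deg v a + ∑ c, deg v c := by
  have hz : ∀ (f : KS V 2 → ℤ) (a : V), fx f ({a, a} : Finset V) = 0 := by
    intro f a; simp [fx]
  have e1 : ∀ f : KS V 2 → ℤ, deg f a = ∑ c ∈ Finset.univ.erase a, fx f {a, c} := by
    intro f
    rw [deg, ← Finset.add_sum_erase Finset.univ _ (Finset.mem_univ a), hz, zero_add]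
  have e2 : ∀ c ∈ Finset.univ.erase a, fx (BB V v) {a, c} =
      ((Fintype.card V : ℤ) - 7) * fx v {a, c} + deg v a + deg v c := by
    intro c hc
    have hac : a ≠ c := (Finset.ne_of_mem_erase hc).symm
    rw [fx_mk _ _ (Finset.card_pair hac), BB_apply, Pi.sub_apply, DU_pair v a c hac,
      Pi.smul_apply, ← fx_mk v]
    simp only [smul_eq_mul]
    ring
  rw [e1, Finset.sum_congr rfl e2, Finset.sum_add_distrib, Finset.sum_add_distrib, ← Finset.mul_sum,
    ← e1, Finset.sum_const, Finset.card_erase_of_mem (Finset.mem_univ a), Finset.card_univ,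
    ← Finset.add_sum_erase Finset.univ (fun c => deg v c) (Finset.mem_univ a), nsmul_eq_mul,
    Nat.cast_sub (Fintype.card_pos_iff.2 ⟨a⟩)]
  push_cast
  ring

variable {k : ℕ}

def emb (e : KS (Fin (k+1)) 2) : KS (Option (Fin (k+1))) 2 :=
  ⟨e.1.map Function.Embedding.some, by rw [Finset.card_map, e.2]⟩

theorem deg_add {V : Type*} [Fintype V] [DecidableEq V] (f g : KS V 2 → ℤ) (a : V) :
    deg (f + g) a = deg f a + deg g a := by
  simp [deg, fx_add, Finset.sum_add_distrib]

theorem deg_smul {V : Type*} [Fintype V] [DecidableEq V] (c : ℤ) (f : KS V 2 → ℤ) (a : V) :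
    deg (c • f) a = c * deg f a := by
  simp only [deg, fx_smul, Finset.mul_sum]

def kap : (KS (Option (Fin (k+1))) 2 → ℤ) →ₗ[ℤ] MM k where
  toFun v := (fun e => v (emb e), fun a => deg v (some a))
  map_add' v w := by
    refine Prod.ext ?_ ?_
    · rfl
    · funext a; exact deg_add v w (some a)
  map_smul' c v := by
    refine Prod.ext ?_ ?_
    · rfl
    · funext a; exact deg_smul c v (some a)

theorem kap_fst (v : KS (Option (Fin (k+1))) 2 → ℤ) : (kap v).1 = fun e => v (emb e) := rfl
theorem kap_snd (v : KS (Option (Fin (k+1))) 2 → ℤ) : (kap v).2 = fun a => deg v (some a) := rfl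

theorem fx_some (v : KS (Option (Fin (k+1))) 2 → ℤ) (a b : Fin (k+1)) :
    fx v {some a, some b} = fx (kap v).1 {a, b} := by
  by_cases h : a = b
  · subst h; simp [fx]
  · have h' : (some a) ≠ some b := by simpa using h
    rw [fx_mk _ _ (Finset.card_pair h), fx_mk _ _ (Finset.card_pair h'), kap_fst]
    simp only [emb]
    congr 1
    apply Subtype.ext
    simp [Finset.map_insert]

theorem deg_some (v : KS (Option (Fin (k+1))) 2 → ℤ) (a : Fin (k+1)) :
    deg v (some a) = fx v {some a, none} + deg (kap v).1 a := by
  rw [deg, Fintype.sum_option, deg]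
  simp only [fx_some]

theorem deg_none (v : KS (Option (Fin (k+1))) 2 → ℤ) :
    deg v none = ∑ a, fx v {some a, none} := by
  rw [deg, Fintype.sum_option]
  have : fx v ({none, none} : Finset (Option (Fin (k+1)))) = 0 := by simp [fx]
  rw [this, zero_add]
  exact Finset.sum_congr rfl fun a _ => by rw [Finset.pair_comm]

theorem deg_none' (v : KS (Option (Fin (k+1))) 2 → ℤ) :
    deg v none = ∑ a, (kap v).2 a - 2 * ∑ e, (kap v).1 e := by
  rw [deg_none, kap_snd]
  simp only [deg_some, Finset.sum_add_distrib]
  rw [handshake]; ring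

theorem kap_degsum (v : KS (Option (Fin (k+1))) 2 → ℤ) :
    ∑ c, deg v c = 2 * ∑ a, (kap v).2 a - 2 * ∑ e, (kap v).1 e := by
  rw [Fintype.sum_option, deg_none', kap_snd]; ring

theorem kap_sum (v : KS (Option (Fin (k+1))) 2 → ℤ) :
    ∑ e, v e = ∑ a, (kap v).2 a - ∑ e, (kap v).1 e := by
  have h1 := kap_degsum v
  rw [handshake] at h1
  linarith

theorem kap_BB (v : KS (Option (Fin (k+1))) 2 → ℤ) : kap (BB _ v) = Bp k (kap v) := by
  refine Prod.ext ?_ ?_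
  · funext e
    obtain ⟨e, he⟩ := e
    obtain ⟨a, b, hab, rfl⟩ := Finset.card_eq_two.1 he
    have h' : (some a) ≠ some b := by simpa using hab
    rw [← fx_mk (kap (BB _ v)).1, ← fx_some, fx_mk _ _ (Finset.card_pair h'), BB_apply, Pi.sub_apply,
      DU_pair v _ _ h', Pi.smul_apply, ← fx_mk v, fx_some, ← fx_mk (Bp k (kap v)).1 _ he,
      fx_mk _ _ he, fx_mk _ _ he]
    simp only [Bp, Pi.add_apply, Pi.smul_apply, U1, LinearMap.coe_mk, AddHom.coe_mk,
      Finset.sum_pair hab, kap_snd, Fintype.card_option, Fintype.card_fin, smul_eq_mul]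
    push_cast
    ring
  · funext a
    rw [kap_snd]
    simp only [deg_BB, kap_degsum, Bp, Pi.add_apply, Pi.smul_apply, smul_eq_mul, Pi.one_apply,
      Fintype.card_option, Fintype.card_fin]
    rw [kap_snd]
    push_cast
    ring

theorem kap_one : kap (k := k) 1 = (1, ((k:ℤ) + 1) • 1) := by
  refine Prod.ext ?_ ?_
  · rfl
  · funext a
    rw [kap_snd]
    have hz : fx (1 : KS (Option (Fin (k+1))) 2 → ℤ) ({some a, some a} : Finset _) = 0 := by simp [fx]
    simp only
    rw [deg, ← Finset.add_sum_erase Finset.univ _ (Finset.mem_univ (some a)), hz, zero_add,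
      Finset.sum_congr rfl (g := fun _ => (1:ℤ))]
    · simp [Finset.card_erase_of_mem]
    · intro c hc
      rw [fx_mk _ _ (Finset.card_pair (Finset.ne_of_mem_erase hc).symm)]
      rfl

theorem kap_inj : Function.Injective (kap (k := k)) := by
  rw [← LinearMap.ker_eq_bot, LinearMap.ker_eq_bot']
  intro v hv
  have h1 : (kap v).1 = 0 := by rw [hv]; rfl
  have h2 : (kap v).2 = 0 := by rw [hv]; rfl
  have hd : ∀ a : Fin (k+1), deg (0 : KS (Fin (k+1)) 2 → ℤ) a = 0 := by
    intro a; simp [deg, fx]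
  have h3 : ∀ a, fx v {some a, none} = 0 := by
    intro a
    have := congrFun h2 a
    rw [kap_snd] at this
    simp only at this
    rw [deg_some, h1, hd, add_zero] at this
    exact this
  funext e
  obtain ⟨e, he⟩ := e
  obtain ⟨a, b, hab, rfl⟩ := Finset.card_eq_two.1 he
  rw [← fx_mk v, Pi.zero_apply]
  rcases a with _ | a <;> rcases b with _ | b
  · exact absurd rfl hab
  · have h4 := h3 b
    rw [Finset.pair_comm] at h4
    exact h4
  · exact h3 a
  · rw [fx_some, h1]; simp [fx]

theorem kap_surj : Function.Surjective (kap (k := k)) := by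
  rintro ⟨f, x⟩
  let v : KS (Option (Fin (k+1))) 2 → ℤ := fun e =>
    if none ∈ e.1 then ∑ a ∈ Finset.eraseNone e.1, (x a - deg f a) else fx f (Finset.eraseNone e.1)
  have h1 : (kap v).1 = f := by
    rw [kap_fst]
    funext e
    simp only [v, emb]
    rw [if_neg (by simp), Finset.eraseNone_map_some, fx_val]
  refine ⟨v, Prod.ext h1 ?_⟩
  funext a
  rw [kap_snd]
  simp only
  have hn : (some a) ≠ (none : Option (Fin (k+1))) := by simp
  rw [deg_some, h1, fx_mk _ _ (Finset.card_pair hn)]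
  simp only [v]
  have : Finset.eraseNone ({some a, none} : Finset (Option (Fin (k+1)))) = {a} := by
    ext b; simp
  rw [if_pos (by simp), this]
  simp

noncomputable def kapE : (KS (Option (Fin (k+1))) 2 → ℤ) ≃ₗ[ℤ] MM k :=
  LinearEquiv.ofBijective kap ⟨kap_inj, kap_surj⟩

theorem kapE_symm (m : MM k) : kap (kapE.symm m) = m := by
  exact kapE.apply_symm_apply m

noncomputable def sk : MM k →ₗ[ℤ] NN (Option (Fin (k+1))) := (ss _).comp kapE.symm.toLinearMap

theorem sk_zero_iff (hk : 5 ≤ k) (m : MM k) : sk m = 0 ↔ InRel k m := by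
  have hc : Fintype.card (Option (Fin (k+1))) = k + 2 := by simp
  have hc' : ((Fintype.card (Option (Fin (k+1))) : ℤ) - 3) = (k:ℤ) - 1 := by rw [hc]; push_cast; ring
  rw [sk, LinearMap.comp_apply, ss_iff (by omega), hc']
  constructor
  · rintro ⟨v, γ, h⟩
    refine ⟨kap v, γ, ?_⟩
    rw [← kap_BB, ← kap_one, ← map_smul, ← map_add, ← h]
    exact (kapE_symm m).symm
  · rintro ⟨m', γ, h⟩
    obtain ⟨v, rfl⟩ := kap_surj m'
    refine ⟨v, γ, kap_inj ?_⟩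
    rw [map_add, kap_BB, map_smul, kap_one, ← h]
    exact kapE_symm m

theorem sk_three (hk : 5 ≤ k) (m : MM k) (h : 3 ∣ ∑ a, m.2 a - ∑ e, m.1 e ∨ (k + 2) % 3 = 2) :
    ∃ x, (3:ℤ) • x = sk m := by
  have hc : Fintype.card (Option (Fin (k+1))) = k + 2 := by simp
  refine ss_three (by omega) _ ?_
  rw [hc]
  rcases h with h | h
  · left
    have := kap_sum (kapE.symm m)
    rw [kapE_symm] at this
    change 3 ∣ ∑ e, kapE.symm m e
    rwa [this]
  · exact Or.inr h

theorem sk_gen (x : NN (Option (Fin (k+1)))) :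
    ∃ m : MM k, (3:ℤ) • x = sk m ∧ 3 ∣ ∑ a, m.2 a - ∑ e, m.1 e := by
  obtain ⟨y, rfl⟩ := Submodule.mkQ_surjective _ x
  refine ⟨kap (Dn ℤ y), ?_, ?_⟩
  · rw [three_mk, sk, LinearMap.comp_apply]
    congr 1
    exact (kapE.symm_apply_apply (Dn ℤ y)).symm
  · rw [← kap_sum, Dn_sum]
    exact Dvd.intro _ rfl

end kappa


theorem two_gen (g p q r a b : ℤ) (h : q * a + r * b = 1) (x y : ℤ) :
    (∃ B γ : ℤ, x * q - y * b = g * p * γ + g * q * B ∧ x * r + y * a = g * r * B) ↔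
      g ∣ x ∧ (g * p * r) ∣ y := by
  constructor
  · rintro ⟨B, γ, h1, h2⟩
    refine ⟨⟨a * p * γ + B, ?_⟩, ⟨-γ, ?_⟩⟩
    · linear_combination a * h1 + b * h2 - (x - g * B) * h
    · linear_combination (-r) * h1 + q * h2 - y * h
  · rintro ⟨⟨x', rfl⟩, ⟨y', rfl⟩⟩
    refine ⟨x' + a * p * y', -y', ?_, ?_⟩
    · linear_combination (-g * p * y') * h
    · ring

theorem two_surj (q r a b : ℤ) (h : q * a + r * b = 1) (s t : ℤ) :
    ∃ x y : ℤ, s = x * q - y * b ∧ t = x * r + y * a := by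
  refine ⟨a * s + b * t, q * t - r * s, ?_, ?_⟩
  · linear_combination (-s) * h
  · linear_combination (-t) * h

def tcond (i : ℕ) (α β : ℤ) : Prop := 3 ∣ (i : ℤ) * α - β ∨ i % 3 = 1

theorem T0 (i : ℕ) : ∃ (Y' : ℕ) (α0 β0 α1 β1 : ℤ),
    Nat.gcd 4 i * Y' * (if i % 3 = 1 then 1 else 3) = (i + 4) * i * (2 * i + 5) ∧
    (∀ x y : ℤ, (∃ b γ : ℤ, x * α0 + y * α1 = 4 * b + (((i:ℤ) + 4) * (2 * i + 5)) * γ ∧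
      x * β0 + y * β1 = i * b) ↔ ((Nat.gcd 4 i : ℕ) : ℤ) ∣ x ∧ (Y' : ℤ) ∣ y) ∧
    tcond i α0 β0 ∧ tcond i α1 β1 ∧
    ∀ α β : ℤ, tcond i α β → ∃ x y : ℤ, α = x * α0 + y * α1 ∧ β = x * β0 + y * β1 := by
  obtain ⟨q0, hq0⟩ := Nat.gcd_dvd_left 4 i
  obtain ⟨r0, hr0⟩ := Nat.gcd_dvd_right 4 i
  have hbez := Nat.gcd_eq_gcd_ab 4 i
  have hgpos : 0 < Nat.gcd 4 i := Nat.gcd_pos_of_pos_left _ (by norm_num)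
  set a := Nat.gcdA 4 i
  set b := Nat.gcdB 4 i
  have hg3 : Nat.Coprime 3 (Nat.gcd 4 i) := 
    Nat.Coprime.coprime_dvd_right (Nat.gcd_dvd_left 4 i) (by norm_num)
  set g := Nat.gcd 4 i
  have hq0z : (4 : ℤ) = g * q0 := by exact_mod_cast hq0
  have hr0z : (i : ℤ) = g * r0 := by exact_mod_cast hr0
  have hb : (q0 : ℤ) * a + r0 * b = 1 := by
    have hg : (g : ℤ) ≠ 0 := by exact_mod_cast hgpos.ne'
    apply mul_left_cancel₀ hg
    push_cast at hbez
    linear_combination (-1) * hbez - a * hq0z - b * hr0z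
  have h3 : i % 3 = 0 ∨ i % 3 = 1 ∨ i % 3 = 2 := by omega
  rcases h3 with h3 | h3 | h3
  · obtain ⟨r1, hr1⟩ : 3 ∣ r0 := by
      refine hg3.dvd_of_dvd_mul_left ?_
      rw [← hr0]; omega
    have hr1z : (r0 : ℤ) = 3 * r1 := by exact_mod_cast hr1
    have hb' : (q0 : ℤ) * a + r1 * (3 * b) = 1 := by linear_combination hb - b * hr1z
    have hi : (i : ℤ) = 3 * (g * r1) := by rw [hr0z, hr1z]; ring
    refine ⟨g * ((q0 + r0) * (2 * i + 5)) * r1, q0, 3 * r1, -(3 * b), 3 * a, ?_, ?_, ?_, ?_, ?_⟩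
    · rw [if_neg (by omega)]
      have : g * (g * ((q0 + r0) * (2 * i + 5)) * r1) * 3 = (g * q0 + g * r0) * (g * (3 * r1)) * (2 * i + 5) := by
        ring
      rw [this, ← hr1, ← hq0, ← hr0]; ring
    · intro x y
      have := two_gen g ((q0 + r0) * (2 * i + 5)) q0 r1 a (3 * b) hb' x y
      push_cast
      rw [← this]
      refine exists_congr fun B => exists_congr fun γ => and_congr ?_ ?_
      · rw [hq0z]
        constructor
        · intro h; linear_combination h + (2 * i + 5) * γ * hr0z
        · intro h; linear_combination h - (2 * i + 5) * γ * hr0z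
      · constructor
        · intro h
          have h' : 3 * (x * r1 + y * a) = 3 * (g * r1 * B) := by linear_combination h + B * hi
          linarith
        · intro h; linear_combination 3 * h - B * hi
    · left; exact ⟨g * r1 * q0 - r1, by rw [hi]; ring⟩
    · left; exact ⟨g * r1 * (-(3 * b)) - a, by rw [hi]; ring⟩
    · rintro α β (h | h)
      · have : (3:ℤ) ∣ β := by
          have h2 : (3:ℤ) ∣ (i:ℤ) * α := ⟨g * r1 * α, by rw [hi]; ring⟩
          have := dvd_sub h2 h
          simpa using this
        obtain ⟨t, rfl⟩ := this
        obtain ⟨x, y, e1, e2⟩ := two_surj q0 r1 a (3 * b) hb' α t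
        exact ⟨x, y, by rw [e1]; ring, by rw [e2]; ring⟩
      · omega
  · refine ⟨g * ((q0 + r0) * (2 * i + 5)) * r0, q0, r0, -b, a, ?_, ?_, Or.inr h3, Or.inr h3, ?_⟩
    · rw [if_pos h3]
      have : g * (g * ((q0 + r0) * (2 * i + 5)) * r0) * 1 = (g * q0 + g * r0) * (g * r0) * (2 * i + 5) := by
        ring
      rw [this, ← hq0, ← hr0]; ring
    · intro x y
      have := two_gen g ((q0 + r0) * (2 * i + 5)) q0 r0 a b hb x y
      push_cast
      rw [← this]
      refine exists_congr fun B => exists_congr fun γ => and_congr ?_ ?_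
      · rw [hq0z]
        constructor
        · intro h; linear_combination h + (2 * i + 5) * γ * hr0z
        · intro h; linear_combination h - (2 * i + 5) * γ * hr0z
      · rw [← hr0z]
    · intro α β _
      obtain ⟨x, y, e1, e2⟩ := two_surj q0 r0 a b hb α β
      exact ⟨x, y, by rw [e1]; ring, by rw [e2]⟩
  · obtain ⟨s1, hs1⟩ : 3 ∣ q0 + r0 := by
      refine hg3.dvd_of_dvd_mul_left ?_
      rw [mul_add, ← hr0, ← hq0]; omega
    have hs1z : (q0 : ℤ) + r0 = 3 * s1 := by exact_mod_cast hs1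
    have hb' : (s1 : ℤ) * (3 * a) + r0 * (b - a) = 1 := by linear_combination hb - a * hs1z
    have hi : (i : ℤ) + 4 = 3 * (g * s1) := by linear_combination hr0z + hq0z + g * hs1z
    refine ⟨g * (s1 * (2 * i + 5)) * r0, 3 * s1 - r0, r0, 3 * (-(b - a)) - 3 * a, 3 * a, ?_, ?_, ?_, ?_, ?_⟩
    · rw [if_neg (by omega)]
      have : g * (g * (s1 * (2 * i + 5)) * r0) * 3 = (g * (3 * s1)) * (g * r0) * (2 * i + 5) := by
        ring
      rw [this, ← hs1, mul_add g q0 r0, ← hq0, ← hr0]; ring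
    · intro x y
      have := two_gen g (s1 * (2 * i + 5)) s1 r0 (3 * a) (b - a) hb' x y
      push_cast
      rw [← this]
      refine exists_congr fun B => exists_congr fun γ => ?_
      constructor
      · rintro ⟨h1, h2⟩
        rw [← hr0z]
        refine ⟨?_, h2⟩
        have : 3 * (x * s1 - y * (b - a)) = 3 * (g * (s1 * (2 * i + 5)) * γ + g * s1 * B) := by
          linear_combination h1 + h2 + ((2 * i + 5) * γ + B) * hi
        linarith
      · rw [← hr0z]
        rintro ⟨h1, h2⟩
        refine ⟨?_, h2⟩
        linear_combination 3 * h1 - h2 - ((2 * i + 5) * γ + B) * hi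
    · left
      exact ⟨g * s1 * (3 * s1 - r0) - 4 * s1 + r0, by linear_combination (3 * s1 - r0) * hi⟩
    · left
      exact ⟨i * (-b) - a, by ring⟩
    · rintro α β (h | h)
      · obtain ⟨t, ht⟩ := h
        obtain ⟨x, y, e1, e2⟩ := two_surj s1 r0 (3 * a) (b - a) hb' (g * s1 * α - t - α) β
        refine ⟨x, y, ?_, e2⟩
        have : 3 * (g * s1 * α - t - α) = α + β := by linear_combination (-α) * hi + ht
        linear_combination (-1) * this + 3 * e1 - e2
      · omega

theorem X_val (i : ℕ) : Nat.gcd (3 * (i + 4) * (2 * i + 5))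
      (Nat.gcd (i * (i + 4) * (2 * i + 5))
        (Nat.gcd 12 (Nat.gcd (2 * (i + 7) * i) (3 * i)))) =
    Nat.gcd 4 i * (if i % 3 = 1 then 1 else 3) := by
  have key : ∀ A B C D : ℕ, Nat.gcd A (Nat.gcd B (Nat.gcd 12 (Nat.gcd C D))) =
      Nat.gcd (A % 12) (Nat.gcd (B % 12) (Nat.gcd 12 (Nat.gcd (C % 12) (D % 12)))) := by
    intro A B C D
    have hd : ∀ x A, x ∣ 12 → (x ∣ A % 12 ↔ x ∣ A) := fun x A h => (Nat.dvd_mod_iff h)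
    apply Nat.dvd_antisymm
    · simp only [Nat.dvd_gcd_iff]
      have h12 : Nat.gcd A (Nat.gcd B (Nat.gcd 12 (Nat.gcd C D))) ∣ 12 :=
        (Nat.gcd_dvd_right _ _).trans ((Nat.gcd_dvd_right _ _).trans (Nat.gcd_dvd_left _ _))
      simp only [hd _ _ h12]
      have : Nat.gcd A (Nat.gcd B (Nat.gcd 12 (Nat.gcd C D))) ∣ Nat.gcd A (Nat.gcd B (Nat.gcd 12 (Nat.gcd C D))) := dvd_rfl
      simpa only [Nat.dvd_gcd_iff] using this
    · simp only [Nat.dvd_gcd_iff]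
      have h12 : Nat.gcd (A % 12) (Nat.gcd (B % 12) (Nat.gcd 12 (Nat.gcd (C % 12) (D % 12)))) ∣ 12 :=
        (Nat.gcd_dvd_right _ _).trans ((Nat.gcd_dvd_right _ _).trans (Nat.gcd_dvd_left _ _))
      set x := Nat.gcd (A % 12) (Nat.gcd (B % 12) (Nat.gcd 12 (Nat.gcd (C % 12) (D % 12)))) with hx
      have : x ∣ Nat.gcd (A % 12) (Nat.gcd (B % 12) (Nat.gcd 12 (Nat.gcd (C % 12) (D % 12)))) := dvd_rfl
      clear_value x
      simp only [Nat.dvd_gcd_iff, hd _ _ h12] at this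
      exact this
  obtain ⟨m, j, hj, rfl⟩ : ∃ m j, j < 12 ∧ i = 12 * m + j := ⟨i / 12, i % 12, Nat.mod_lt _ (by norm_num), by omega⟩
  have e4 : Nat.gcd 4 (12 * m + j) = Nat.gcd 4 j := by
    have : 12 * m + j = 4 * (3 * m) + j := by ring
    rw [this, Nat.gcd_mul_left_add_right]
  rw [key, e4]
  have e3 : (12 * m + j) % 3 = j % 3 := by omega
  rw [e3]
  have m1 : (3 * (12 * m + j + 4) * (2 * (12 * m + j) + 5)) % 12 = (3 * (j + 4) * (2 * j + 5)) % 12 := by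
    rw [← Nat.ModEq]
    gcongr ?_ * ?_ <;> simp [Nat.ModEq] <;> omega
  have m2 : ((12 * m + j) * (12 * m + j + 4) * (2 * (12 * m + j) + 5)) % 12 = (j * (j + 4) * (2 * j + 5)) % 12 := by
    rw [← Nat.ModEq]
    refine Nat.ModEq.mul (Nat.ModEq.mul ?_ ?_) ?_ <;> simp [Nat.ModEq] <;> omega
  have m3 : (2 * (12 * m + j + 7) * (12 * m + j)) % 12 = (2 * (j + 7) * j) % 12 := by
    rw [← Nat.ModEq]
    refine Nat.ModEq.mul ?_ ?_ <;> simp [Nat.ModEq] <;> omega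
  have m4 : (3 * (12 * m + j)) % 12 = (3 * j) % 12 := by omega
  rw [m1, m2, m3, m4]
  clear * - hj
  interval_cases j <;> decide


theorem Lam_sum {a k : ℕ} (hk : 5 ≤ k) (Z : (Fin a → ℤ) →ₗ[ℤ] (KS (Fin (k+1)) 2 → ℤ))
    (hZ0 : ∀ c, ∑ e, Z c e = 0) (c : Fin a → ℤ) (c' w : Fin k → ℤ) (w0 α β : ℤ) :
    ∑ i, (Lam Z (c, c', w, w0, α, β)).2 i - ∑ e, (Lam Z (c, c', w, w0, α, β)).1 e =
      3 * (((k:ℤ) - 1) * (∑ i, w i + (k + 1) * w0)) +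
        α * (((k:ℤ) + 1) * (2 * k - 2) - ((k+1).choose 2 : ℕ)) - β := by
  have hch := choose_two_int k
  rw [Lam_apply]
  simp only [Pi.add_apply, Finset.sum_add_distrib, hZ0, Psi_sum k hk, Pi.smul_apply, smul_eq_mul,
    ← Finset.mul_sum, hat_sum, Pi.one_apply, Finset.sum_const, Finset.card_univ, Fintype.card_fin]
  push_cast
  linear_combination (-w0) * hch

theorem Lam_tcond {a k i : ℕ} (hki : k = i + 5) (Z : (Fin a → ℤ) →ₗ[ℤ] (KS (Fin (k+1)) 2 → ℤ))
    (hZ0 : ∀ c, ∑ e, Z c e = 0) (c : Fin a → ℤ) (c' w : Fin k → ℤ) (w0 α β : ℤ) :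
    3 ∣ ∑ i, (Lam Z (c, c', w, w0, α, β)).2 i - ∑ e, (Lam Z (c, c', w, w0, α, β)).1 e ↔
      3 ∣ (i:ℤ) * α - β := by
  have hch := choose_two_int k
  rw [Lam_sum (by omega) Z hZ0]
  obtain ⟨t, ht⟩ : ∃ t, ((k:ℤ) + 1) * (2 * k - 2) - ((k+1).choose 2 : ℕ) = i + 3 * t := by
    have hk' : (k:ℤ) = i + 5 := by rw [hki]; push_cast; ring
    generalize (((k+1).choose 2 : ℕ) : ℤ) = C at hch ⊢
    rw [hk'] at hch ⊢
    have h1 : 2 * C = (i:ℤ) * i + 11 * i + 30 := by rw [hch]; ring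
    refine ⟨(2 * ((i:ℤ) * i) + 19 * i + 48 - C) / 3, ?_⟩
    have h2 : ((i:ℤ) + 5 + 1) * (2 * (i + 5) - 2) = 2 * (i * i) + 20 * i + 48 := by ring
    rw [h2]
    omega
  rw [ht]
  have : 3 * (((k:ℤ) - 1) * (∑ i, w i + (k + 1) * w0)) + α * (i + 3 * t) - β =
    (i * α - β) + 3 * (((k:ℤ) - 1) * (∑ i, w i + (k + 1) * w0) + α * t) := by ring
  rw [this]
  exact (dvd_add_left (Dvd.intro _ rfl))

theorem NN_ok (i k a : ℕ) (hki : k = i + 5) (ha : a + (k + 2) = (k+1).choose 2) :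
    ∃ Y' : ℕ, Nat.gcd 4 i * Y' * (if i % 3 = 1 then 1 else 3) = (i + 4) * i * (2 * i + 5) ∧
    ∃ h : Fin a ⊕ (Fin k ⊕ Fin 2) → NN (Option (Fin (k+1))),
      (∀ i, ∃ x, (3:ℤ) • x = h i) ∧
      (∀ x, ∃ c : (Fin a ⊕ (Fin k ⊕ Fin 2)) → ℤ, (3:ℤ) • x = ∑ i, c i • h i) ∧
      (∀ c : (Fin a ⊕ (Fin k ⊕ Fin 2)) → ℤ, ∑ i, c i • h i = 0 ↔
        ∀ j, (dfam a k i (2 * i + 5) (Nat.gcd 4 i) Y' j : ℤ) ∣ c j) := by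
  have hk : 5 ≤ k := by omega
  have hk' : (k:ℤ) = i + 5 := by rw [hki]; push_cast; ring
  obtain ⟨Z, hZ0, hZ⟩ := exists_Z k hk a ha
  obtain ⟨Y', α0, β0, α1, β1, hY, hrel, hc0, hc1, hsurj⟩ := T0 i
  refine ⟨Y', hY, ?_⟩
  let e : Fin a ⊕ (Fin k ⊕ Fin 2) → LL a k :=
    Sum.elim (fun j => (Pi.single j 1, 0, 0, 0, 0, 0)) (Sum.elim
      (fun j => (0, Pi.single j 1, 0, 0, 0, 0)) ![(0, 0, 0, 0, α0, β0), (0, 0, 0, 0, α1, β1)])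
  have hsum : ∀ c : Fin a ⊕ (Fin k ⊕ Fin 2) → ℤ, ∑ j, c j • sk (Lam Z (e j)) =
      sk (Lam Z (fun j => c (Sum.inl j), fun j => c (Sum.inr (Sum.inl j)), 0, 0,
        c (Sum.inr (Sum.inr 0)) * α0 + c (Sum.inr (Sum.inr 1)) * α1,
        c (Sum.inr (Sum.inr 0)) * β0 + c (Sum.inr (Sum.inr 1)) * β1)) := by
    intro c
    simp only [← map_smul, ← map_sum]
    congr 2
    rw [Fintype.sum_sum_type, Fintype.sum_sum_type, Fin.sum_univ_two]
    refine Prod.ext ?_ (Prod.ext ?_ (Prod.ext ?_ (Prod.ext ?_ (Prod.ext ?_ ?_))))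
    · funext j
      simp [e, Prod.fst_sum, Finset.sum_apply, Pi.single_apply]
    · funext j
      simp [e, Prod.fst_sum, Prod.snd_sum, Finset.sum_apply, Pi.single_apply]
    · simp [e, Prod.fst_sum, Prod.snd_sum]
    · simp [e, Prod.fst_sum, Prod.snd_sum]
    · simp [e, Prod.fst_sum, Prod.snd_sum]
    · simp [e, Prod.snd_sum]
  have hthree : ∀ c c' w w0 α β, tcond i α β → ∃ x, (3:ℤ) • x = sk (Lam Z (c, c', w, w0, α, β)) := by
    intro c c' w w0 α β h
    refine sk_three hk _ ?_
    rcases h with h | h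
    · left; rwa [Lam_tcond hki Z hZ0]
    · right; omega
  have ht0 : tcond i 0 0 := Or.inl (by simp)
  refine ⟨fun j => sk (Lam Z (e j)), ?_, ?_, ?_⟩
  · rintro (j | j | j)
    · exact hthree _ _ _ _ _ _ ht0
    · exact hthree _ _ _ _ _ _ ht0
    · revert j
      rw [Fin.forall_fin_two]
      exact ⟨hthree _ _ _ _ _ _ hc0, hthree _ _ _ _ _ _ hc1⟩
  · intro x
    obtain ⟨m, hx, hm⟩ := sk_gen x
    obtain ⟨⟨c, c', w, w0, α, β⟩, rfl⟩ := Lam_surj Z hZ m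
    rw [Lam_tcond hki Z hZ0] at hm
    obtain ⟨x0, y0, h1, h2⟩ := hsurj α β (Or.inl hm)
    refine ⟨Sum.elim c (Sum.elim c' ![x0, y0]), ?_⟩
    rw [hsum, hx]
    have h0 : sk (Lam Z ((0, 0, w, w0, 0, 0) : LL a k)) = 0 := by
      rw [sk_zero_iff hk, Lam_iff hk Z hZ0 hZ]
      exact ⟨by simp, by simp, 0, 0, by simp, by simp⟩
    have hs : ((c, c', w, w0, α, β) : LL a k) = (c, c', 0, 0, α, β) + (0, 0, w, w0, 0, 0) := by
      simp
    rw [hs, map_add, map_add, h0, add_zero]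
    simp only [Sum.elim_inl, Sum.elim_inr, Matrix.cons_val_zero, Matrix.cons_val_one]
    rw [← h1, ← h2]
  · intro c
    rw [hsum, sk_zero_iff hk, Lam_iff hk Z hZ0 hZ]
    have e1 : (k:ℤ) - 5 = i := by rw [hk']; ring
    have e2 : 2 * (k:ℤ) - 5 = 2 * i + 5 := by rw [hk']; ring
    have e3 : (k:ℤ) - 1 = i + 4 := by rw [hk']; ring
    rw [e1, e2, e3, hrel]
    simp only [Sum.forall, Fin.forall_fin_two, dfam, Sum.elim_inl, Sum.elim_inr,
      Matrix.cons_val_zero, Matrix.cons_val_one]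
    push_cast
    rfl

theorem fx_single {V : Type*} [Fintype V] [DecidableEq V] (T0 : KS V 3) (s : Finset V) :
    fx (Pi.single T0 1 : KS V 3 → ℤ) s = if s = T0.1 then 1 else 0 := by
  unfold fx
  split_ifs with h1 h2 h2
  · have : (⟨s, h1⟩ : KS V 3) = T0 := Subtype.ext h2
    rw [this, Pi.single_eq_same]
  · rw [Pi.single_eq_of_ne]
    intro h; apply h2; rw [← h]
  · exact absurd (by rw [h2]; exact T0.2) h1
  · rfl

theorem Aop_single {V : Type*} [Fintype V] [DecidableEq V] (T0 T : KS V 3) :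
    Aop V (Pi.single T0 1) T = if (T0.1 ∩ T.1).card = 2 then 1 else 0 := by
  rw [Aop_apply, Pi.sub_apply, UD_apply]
  simp only [Pi.smul_apply, smul_eq_mul, add_sub_cancel_left, fx_single]
  split_ifs with h
  · have h1 : (T.1 \ T0.1).card = 1 := by
      have := Finset.card_sdiff_add_card_inter T.1 T0.1
      rw [Finset.inter_comm, T.2, h] at this; omega
    have h2 : (T0.1 \ T.1).card = 1 := by
      have := Finset.card_sdiff_add_card_inter T0.1 T.1
      rw [T0.2, h] at this; omega
    obtain ⟨a0, ha⟩ := Finset.card_eq_one.1 h1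
    obtain ⟨b0, hb⟩ := Finset.card_eq_one.1 h2
    have ha' : ∀ x, x ∈ T.1 ∧ x ∉ T0.1 ↔ x = a0 := by
      intro x; rw [← Finset.mem_sdiff, ha, Finset.mem_singleton]
    have hb' : ∀ x, x ∈ T0.1 ∧ x ∉ T.1 ↔ x = b0 := by
      intro x; rw [← Finset.mem_sdiff, hb, Finset.mem_singleton]
    have ha0 := (ha' a0).2 rfl
    have hb0 := (hb' b0).2 rfl
    have key : ∀ a ∈ T.1, ∀ b ∈ T.1ᶜ, insert b (T.1.erase a) = T0.1 ↔ a = a0 ∧ b = b0 := by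
      intro a hat b hbt
      rw [Finset.mem_compl] at hbt
      constructor
      · intro he
        constructor
        · rw [← ha']
          refine ⟨hat, ?_⟩
          rw [← he]
          simp only [Finset.mem_insert, Finset.mem_erase, ne_eq, not_true, false_and, or_false]
          rintro rfl; exact hbt hat
        · rw [← hb']
          exact ⟨by rw [← he]; simp, hbt⟩
      · rintro ⟨rfl, rfl⟩
        ext x
        simp only [Finset.mem_insert, Finset.mem_erase]
        have := ha' x
        have := hb' x
        by_cases x ∈ T.1 <;> by_cases x ∈ T0.1 <;> grind
    rw [Finset.sum_eq_single a0, Finset.sum_eq_single b0]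
    · rw [if_pos ((key a0 ha0.1 b0 (Finset.mem_compl.2 hb0.2)).2 ⟨rfl, rfl⟩)]
    · intro b hb hne
      rw [if_neg]; rw [key a0 ha0.1 b hb]; exact fun h => hne h.2
    · intro h; exact absurd (Finset.mem_compl.2 hb0.2) h
    · intro a ha hne
      refine Finset.sum_eq_zero fun b hb => ?_
      rw [if_neg]; rw [key a ha b hb]; exact fun h => hne h.1
    · intro h; exact absurd ha0.1 h
  · refine Finset.sum_eq_zero fun a hat => Finset.sum_eq_zero fun b hbt => ?_
    rw [if_neg]
    intro he
    apply h
    rw [Finset.mem_compl] at hbt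
    have : T0.1 ∩ T.1 = T.1.erase a := by
      rw [← he]
      ext x
      simp only [Finset.mem_inter, Finset.mem_insert, Finset.mem_erase]
      grind
    rw [this, Finset.card_erase_of_mem hat, T.2]

theorem range_Aop {V : Type*} [Fintype V] [DecidableEq V] :
    LinearMap.range (Aop V) = Submodule.span ℤ (Set.range fun T : KS V 3 => Aop V (Pi.single T 1)) := by
  rw [LinearMap.range_eq_map, ← (Pi.basisFun ℤ (KS V 3)).span_eq, Submodule.map_span, ← Set.range_comp]
  congr 2
  funext T
  simp

theorem card_ksubsets (n k : ℕ) : (ksubsets n k).card = n.choose k := by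
  have : ksubsets n k = (Finset.Icc 1 n).powersetCard k := by
    ext s; simp [ksubsets, Finset.mem_powersetCard]
  rw [this, Finset.card_powersetCard]; simp

theorem transport (n : ℕ) (V : Type) [Fintype V] [DecidableEq V] (hV : Fintype.card V = n) :
    Nonempty (SmithGroup (interMat n 3 3 2) ≃+ NN V) := by
  let ψ : V ≃ ↥(Finset.Icc 1 n) := Fintype.equivOfCardEq (by simp [hV])
  let f : V ↪ ℕ := ψ.toEmbedding.trans (Function.Embedding.subtype _)
  have hf : ∀ s : KS V 3, s.1.map f ∈ ksubsets n 3 := by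
    intro s
    simp only [ksubsets, Finset.mem_filter, Finset.mem_powerset, Finset.card_map, s.2, and_true]
    intro x hx
    obtain ⟨y, _, rfl⟩ := Finset.mem_map.1 hx
    exact (ψ y).2
  let φ0 : KS V 3 → ↥(ksubsets n 3) := fun s => ⟨s.1.map f, hf s⟩
  have hφ : Function.Bijective φ0 := by
    rw [Fintype.bijective_iff_injective_and_card]
    constructor
    · intro s t h
      simp only [φ0, Subtype.mk.injEq] at h
      exact Subtype.ext (Finset.map_injective f h)
    · rw [card_KS, hV, Fintype.card_coe, card_ksubsets]
  let φ := Equiv.ofBijective φ0 hφ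
  let L : (↥(ksubsets n 3) → ℤ) ≃ₗ[ℤ] (KS V 3 → ℤ) := LinearEquiv.funCongrLeft ℤ ℤ φ
  refine ⟨(Submodule.Quotient.equiv _ _ L ?_).toAddEquiv⟩
  rw [range_Aop, Submodule.map_span, ← Set.range_comp]
  congr 1
  rw [← φ.surjective.range_comp]
  congr 1
  funext T0
  funext T
  rw [Aop_single]
  simp only [Function.comp_apply]
  change interMat n 3 3 2 (φ T0) (φ T) = _
  have : ((φ T0 : Finset ℕ) ∩ (φ T : Finset ℕ)) = (T0.1 ∩ T.1).map f := by
    rw [Finset.map_inter]; rfl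
  rw [interMat, Matrix.of_apply, this, Finset.card_map]

theorem zmod_fin (m : ℕ) : Module.Finite ℤ (ZMod m) := by
  refine Module.Finite.of_surjective (Int.castAddHom (ZMod m)).toIntLinearMap ?_
  exact ZMod.intCast_surjective

theorem main_i (i X Y : ℕ)
    (hX : X = Nat.gcd (3 * (i + 4) * (2 * i + 5))
      (Nat.gcd (i * (i + 4) * (2 * i + 5))
        (Nat.gcd 12 (Nat.gcd (2 * (i + 7) * i) (3 * i)))))
    (hY : X * Y = 3 * (i + 4) * i * (2 * i + 5)) :
    Nonempty (SmithGroup (interMat (i + 7) 3 3 2) ≃+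
      ((Fin ((i + 7).choose 2 - 2 * (i + 7) + 1) → ZMod (3 * i)) ×
        (Fin (i + 5) → ZMod (3 * (2 * i + 5) * i)) ×
        (Fin (((i + 7).choose 3 : ℤ) - 2 * ((i + 7).choose 2 : ℤ) + ((i + 7 : ℕ) : ℤ) + 1).toNat → ZMod 3) ×
        ZMod X × ZMod Y)) := by
  rw [X_val] at hX
  have hch2 := choose_two_int (i + 6)
  have hch1 : (i + 7).choose 2 = (i + 6) + (i + 6).choose 2 := by
    rw [Nat.choose_succ_succ' (i + 6) 1, Nat.choose_one_right]
  have hch3 : (i + 7).choose 3 * 3 = (i + 7).choose 2 * (i + 5) := Nat.choose_succ_right_eq (i + 7) 2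
  have hge : 2 * (i + 7) ≤ (i + 7).choose 2 := by
    push_cast at hch2
    have : (2 * (i + 7) : ℤ) ≤ ((i + 7).choose 2 : ℕ) := by nlinarith
    exact_mod_cast this
  have hk3 : (0:ℤ) ≤ ((i + 7).choose 3 : ℤ) - 2 * ((i + 7).choose 2 : ℤ) + ((i + 7 : ℕ) : ℤ) + 1 := by
    have h3 : ((i + 7).choose 3 : ℤ) * 3 = ((i + 7).choose 2 : ℤ) * (i + 5) := by exact_mod_cast hch3
    have hp : (0:ℤ) ≤ ((i + 7).choose 2 : ℤ) := by positivity
    rcases Nat.eq_zero_or_pos i with h0 | h0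
    · subst h0
      decide
    · have : (1:ℤ) ≤ i := by exact_mod_cast h0
      push_cast
      nlinarith
  set k3 := (((i + 7).choose 3 : ℤ) - 2 * ((i + 7).choose 2 : ℤ) + ((i + 7 : ℕ) : ℤ) + 1).toNat with hk3d
  have hk3e : (k3 : ℤ) = ((i + 7).choose 3 : ℤ) - 2 * ((i + 7).choose 2 : ℤ) + ((i + 7 : ℕ) : ℤ) + 1 :=
    Int.toNat_of_nonneg hk3
  clear_value k3
  set a := (i + 7).choose 2 - 2 * (i + 7) + 1 with haD
  have hae : a + 2 * (i + 7) = (i + 7).choose 2 + 1 := by omega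
  clear_value a
  have ha : a + (i + 5 + 2) = (i + 5 + 1).choose 2 := by
    change a + (i + 7) = (i + 6).choose 2
    omega
  obtain ⟨Y', hY', h, h1, h2, h3⟩ := NN_ok i (i + 5) a rfl ha
  have hgpos : 0 < Nat.gcd 4 i := Nat.gcd_pos_of_pos_left _ (by norm_num)
  have hg3 : ¬ 3 ∣ Nat.gcd 4 i := by
    intro h
    have := h.trans (Nat.gcd_dvd_left 4 i)
    omega
  have hXpos : 0 < X := by rw [hX]; split_ifs <;> omega
  have hYY : Y = 3 * Y' := by
    apply Nat.eq_of_mul_eq_mul_left hXpos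
    rw [hY, hX]
    calc 3 * (i + 4) * i * (2 * i + 5) = 3 * ((i + 4) * i * (2 * i + 5)) := by ring
      _ = _ := by rw [← hY']; ring
  subst hYY
  have hX' : X = 3 * Nat.gcd 4 i ∨ (X = Nat.gcd 4 i ∧ ¬ 3 ∣ Nat.gcd 4 i) := by
    rw [hX]
    split_ifs
    · right; exact ⟨by ring, hg3⟩
    · left; ring
  obtain ⟨h', h1', h2', h3'⟩ := target_ok a (i + 5) k3 i (2 * i + 5) (Nat.gcd 4 i) Y' X hX'
  have hcV : Fintype.card (Option (Fin (i + 5 + 1))) = i + 7 := by simp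
  obtain ⟨E⟩ := transport (i + 7) (Option (Fin (i + 5 + 1))) hcV
  have hcard : hc (NN (Option (Fin (i + 5 + 1)))) =
      hc ((Fin a → ZMod (3 * i)) × (Fin (i + 5) → ZMod (3 * (2 * i + 5) * i)) ×
        (Fin k3 → ZMod 3) × ZMod X × ZMod (3 * Y')) := by
    rw [target_hc, hc_NN (by omega) (a + (i + 5) + k3 + 1) (by rw [hcV]; omega), hcV]
    congr 1
    rw [hX]
    by_cases hi : i % 3 = 1
    · rw [if_pos (by omega), if_pos hi, if_neg (by rwa [mul_one])]
    · rw [if_neg (by omega), if_neg hi, if_pos (Dvd.intro_left _ rfl)]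
  have hfin : Module.Finite ℤ ((Fin a → ZMod (3 * i)) × (Fin (i + 5) → ZMod (3 * (2 * i + 5) * i)) ×
        (Fin k3 → ZMod 3) × ZMod X × ZMod (3 * Y')) := by
    have := zmod_fin
    convert (inferInstance : Module.Finite ℤ ((Fin a → ZMod (3 * i)) ×
      (Fin (i + 5) → ZMod (3 * (2 * i + 5) * i)) × (Fin k3 → ZMod 3) × ZMod X × ZMod (3 * Y')))
  obtain ⟨F⟩ := struct3_unique (dfam a (i + 5) i (2 * i + 5) (Nat.gcd 4 i) Y') h h1 h2 h3 h' h1' h2' h3' hcard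
  exact ⟨E.trans F⟩

/-- With `X = gcd(3(n−3)(2n−9), (n−7)(n−3)(2n−9), 12, 2n(n−7), 3(n−7))` and
`X·Y = 3(n−3)(n−7)(2n−9)`:
`S(A_{n,3,3,2}) ≅ (ℤ/3(n−7)ℤ)^{C(n,2)−2n+1} ⊕ (ℤ/3(2n−9)(n−7)ℤ)^{n−2}
  ⊕ (ℤ/3ℤ)^{C(n,3)−2C(n,2)+n+1} ⊕ ℤ/Xℤ ⊕ ℤ/Yℤ` (with `ℤ/0ℤ = ℤ`). -/
theorem statement19 (n : ℕ) (hn : 7 ≤ n) (X Y : ℕ)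
    (hX : X = Nat.gcd (3 * (n - 3) * (2 * n - 9))
      (Nat.gcd ((n - 7) * (n - 3) * (2 * n - 9))
        (Nat.gcd 12 (Nat.gcd (2 * n * (n - 7)) (3 * (n - 7))))))
    (hY : X * Y = 3 * (n - 3) * (n - 7) * (2 * n - 9)) :
    Nonempty (SmithGroup (interMat n 3 3 2) ≃+
      ((Fin (n.choose 2 - 2 * n + 1) → ZMod (3 * (n - 7))) ×
        (Fin (n - 2) → ZMod (3 * (2 * n - 9) * (n - 7))) ×
        (Fin ((n.choose 3 : ℤ) - 2 * (n.choose 2 : ℤ) + (n : ℤ) + 1).toNat → ZMod 3) ×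
        ZMod X × ZMod Y)) := by
  obtain ⟨i, rfl⟩ : ∃ i, n = i + 7 := ⟨n - 7, by omega⟩
  have e1 : i + 7 - 3 = i + 4 := by omega
  have e2 : 2 * (i + 7) - 9 = 2 * i + 5 := by omega
  have e3 : i + 7 - 7 = i := by omega
  have e4 : i + 7 - 2 = i + 5 := by omega
  rw [e1, e2, e3] at hX hY
  rw [e2, e3, e4]
  exact main_i i X Y hX hY
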